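/- Let X = A_m with m ≥ 2 and let ν = (…, a, b, …) be a dominant weight for X whose j-th coefficient is a ≥ 1 and whose (j+1)-st coefficient is b ≥ 2 (for some 1 ≤ j ≤ m−1). Set ε = 3ν − α_j − 2α_{j+1}, where α_1,…,α_m are the simple roots (so ε has j-th coefficient 3a and (j+1)-st coefficient 3b−3). Then: (i) the irreducible module V_X(ε) occurs with multiplicity at least 2 in Λ^3(V_X(ν)); (ii) the multiplicity of V_X(ε) in Λ^2(V_X(ν)) ⊗ V_X(ν) exceeds its multiplicity in Λ^3(V_X(ν)) by at least 2 (i.e. the complement of Λ^3(V_X(ν)) inside Λ^2(V_X(ν)) ⊗ V_X(ν) also contains V_X(ε) with multiplicity at least 2); (iii) S(ε) ≥ S(ν) + 2a + 2b − 3, where S(μ) denotes the sum of the coefficients of a dominant weight μ with respect to the fundamental dominant weights. -/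

import Mathlib

/-!
# Common framework

Over an algebraically closed field of characteristic zero, finite–dimensional rational
representations of a simple algebraic group are semisimple and are determined by their
formal characters, i.e. by elements of the group ring of the (rational) weight lattice;
the character of the irreducible module of highest weight `λ` is pinned down by the
Weyl character formula `A_ρ · χ_λ = A_{λ+ρ}`.

Below we model, completely combinatorially:

* type `A_r` : weights are realised by their traceless representatives in `Fin (r+1) → ℚ`
  (the `gl`-coordinates), and the Weyl group is the symmetric group;
* types `B_n, C_n, D_n` : weights are realised in the standard `ε`-coordinates
  `Fin n → ℚ`, and the Weyl group consists of (signed) permutations, with evenly many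
  sign changes in type `D`;
* an embedding `X = A_r < Y` (classical of type `t` and rank `n`) in which `X` acts on
  the natural module `W` of `Y` irreducibly with highest weight `δ` : the weights of `W`
  are `± w i` (plus one zero weight in type `B`), and restriction of characters is induced
  by the map `v ↦ ∑ i, v i • w i` of weight lattices;
* `IsMFRes t n r δ lam` : the restriction to `X` of the irreducible `Y`-module with
  highest weight `lam` is multiplicity-free, i.e. its character is a sum of distinct
  irreducible characters of `X`.

Dominant weights are always recorded by their (natural number) coordinates in the basis
of fundamental weights, `e n k` being the `k`-th fundamental weight (1-indexed).
-/

noncomputable section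

namespace MFPaper

/-- The Dynkin type of a classical group `B_n = SO_{2n+1}`, `C_n = Sp_{2n}`, `D_n = SO_{2n}`. -/
inductive CType | B | C | D
deriving DecidableEq

/-- The character ring: the integral group ring of a rational weight space
with `k` coordinates. -/
abbrev CharRing (k : ℕ) : Type := AddMonoidAlgebra ℤ (Fin k → ℚ)

/-- The formal exponential `e^v` of a weight `v`. -/
def mono {k : ℕ} (v : Fin k → ℚ) : CharRing k := AddMonoidAlgebra.single v 1

/-- `e n k` : the `k`-th fundamental dominant weight (`1 ≤ k ≤ n`, 1-indexed) of a rank `n`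
group, recorded by its coordinates in the basis of fundamental weights. -/
def e (n k : ℕ) : Fin n → ℕ := fun i => if (i : ℕ) + 1 = k then 1 else 0

/-! ### Type `A_r` -/

/-- The partition (`gl`) lift of the dominant weight of `A_r` with coordinates `d`
in the basis of fundamental weights. -/
def partLift (r : ℕ) (d : Fin r → ℕ) : Fin (r + 1) → ℚ := fun i =>
  ∑ j ∈ Finset.univ.filter (fun j : Fin r => (i : ℕ) ≤ (j : ℕ)), (d j : ℚ)

/-- The traceless (`sl`) representative of the dominant weight of `A_r` with coordinates `d`. -/
def slWt (r : ℕ) (d : Fin r → ℕ) : Fin (r + 1) → ℚ := fun i =>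
  partLift r d i - (∑ j : Fin r, (((j : ℕ) : ℚ) + 1) * (d j : ℚ)) / (r + 1)

/-- A lift of the half-sum of the positive roots of `A_r`. -/
def rhoA (r : ℕ) : Fin (r + 1) → ℚ := fun i => (r : ℚ) - (i : ℕ)

/-- The Weyl alternating sum `A_v = ∑_{σ} sgn(σ) e^{σ v}` for type `A_r`. -/
def altA (r : ℕ) (v : Fin (r + 1) → ℚ) : CharRing (r + 1) :=
  ∑ σ : Equiv.Perm (Fin (r + 1)),
    ((Equiv.Perm.sign σ : ℤˣ) : ℤ) • mono (fun i => v (σ i))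

/-- `IsCharA r d f` : `f` is the formal character of the irreducible `A_r`-module
of highest weight `d` (Weyl character formula). -/
def IsCharA (r : ℕ) (d : Fin r → ℕ) (f : CharRing (r + 1)) : Prop :=
  altA r (rhoA r) * f = altA r (slWt r d + rhoA r)

/-- `Decomp r F c` : the character `F` of a representation of `A_r` decomposes as
`∑_μ (c μ) · χ_μ`, i.e. the irreducible of highest weight `μ` occurs in it as a
composition factor with multiplicity `c μ`. -/
def Decomp (r : ℕ) (F : CharRing (r + 1)) (c : (Fin r → ℕ) →₀ ℕ) : Prop :=
  F * altA r (rhoA r) = c.sum fun μ k => (k : ℤ) • altA r (slWt r μ + rhoA r)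

/-- The Weyl dimension formula for type `A_r`. -/
def dimA (r : ℕ) (d : Fin r → ℕ) : ℚ :=
  ∏ p ∈ Finset.univ.filter (fun p : Fin (r + 1) × Fin (r + 1) => (p.1 : ℕ) < (p.2 : ℕ)),
    ((partLift r d p.1 - partLift r d p.2 + ((p.2 : ℕ) : ℚ) - ((p.1 : ℕ) : ℚ)) /
      (((p.2 : ℕ) : ℚ) - ((p.1 : ℕ) : ℚ)))

/-- The self-dual irreducible `A_r`-module of highest weight `d` is *symplectic*
(it carries an invariant alternating form); by Steinberg's criterion this happens
exactly when `⟨d, 2ρ^∨⟩ = ∑ d_k · k(r+1-k)` is odd. -/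
def IsSympWt (r : ℕ) (d : Fin r → ℕ) : Prop :=
  Odd (∑ i : Fin r, d i * ((i : ℕ) + 1) * (r - (i : ℕ)))

/-! ### The classical types `B`, `C`, `D` -/

/-- Convenient access to the `k`-th (0-indexed) coordinate. -/
def cval {n : ℕ} (c : Fin n → ℕ) (k : ℕ) : ℚ := if h : k < n then (c ⟨k, h⟩ : ℚ) else 0

/-- `ε`-coordinates of the dominant weight of the classical group of type `t` and rank `n`
with coordinates `c` in the basis of fundamental weights (Bourbaki numbering). -/
def epsWt (t : CType) (n : ℕ) (c : Fin n → ℕ) : Fin n → ℚ := fun i =>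
  (∑ k ∈ Finset.univ.filter (fun k : Fin n => (i : ℕ) ≤ (k : ℕ)), (c k : ℚ)) -
    (match t with
      | .C => 0
      | .B => cval c (n - 1) / 2
      | .D => (cval c (n - 2) + cval c (n - 1)) / 2)

/-- The half-sum of the positive roots in `ε`-coordinates. -/
def rhoY (t : CType) (n : ℕ) : Fin n → ℚ := fun i =>
  match t with
  | .C => (n : ℚ) - (i : ℕ)
  | .B => (n : ℚ) - (i : ℕ) - 1 / 2
  | .D => (n : ℚ) - 1 - (i : ℕ)

/-- The Weyl alternating sum for the classical group of type `t` and rank `n`: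
the Weyl group consists of the signed permutations of the coordinates,
with evenly many sign changes in type `D`. -/
def altY (t : CType) (n : ℕ) (v : Fin n → ℚ) : CharRing n :=
  ∑ σ : Equiv.Perm (Fin n), ∑ s : Fin n → Bool,
    if t = CType.D ∧ ¬ Even (Finset.univ.filter (fun i => s i = true)).card then 0
    else (((Equiv.Perm.sign σ : ℤˣ) : ℤ) *
          (-1) ^ (Finset.univ.filter (fun i => s i = true)).card) •
      mono (fun i => (if s i then -1 else 1) * v (σ i))

/-- `IsCharY t n c f` : `f` is the formal character of the irreducible module of highest
weight `c` for the classical group of type `t` and rank `n` (Weyl character formula). -/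
def IsCharY (t : CType) (n : ℕ) (c : Fin n → ℕ) (f : CharRing n) : Prop :=
  altY t n (rhoY t n) * f = altY t n (epsWt t n c + rhoY t n)

/-! ### The embedding `X = A_r < Y` via `δ`, and restriction of characters -/

/-- `WtSys t n r δ w` : `w` lists "half" of the weights of the natural module
`W = V_X(δ)` of the classical group `Y` of type `t` and rank `n`, for `X = A_r`:
the weights of `W` (with multiplicity) are exactly the `± w i`, together with one
extra zero weight in type `B`.  Such a `w` records a maximal torus embedding
`T_X → T_Y` realising the irreducible embedding `X < Y = SO(W)` or `Sp(W)` given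
by the representation of highest weight `δ`. -/
def WtSys (t : CType) (n r : ℕ) (δ : Fin r → ℕ)
    (w : Fin n → (Fin (r + 1) → ℚ)) : Prop :=
  ((∑ i : Fin n, (mono (w i) + mono (-(w i)))) +
      (if t = CType.B then mono (0 : Fin (r + 1) → ℚ) else 0)) * altA r (rhoA r)
    = altA r (slWt r δ + rhoA r)

/-- Restriction of characters from `Y` to `X = A_r` along the torus embedding
recorded by `w`. -/
def resChar {n r : ℕ} (w : Fin n → (Fin (r + 1) → ℚ)) (F : CharRing n) :
    CharRing (r + 1) :=
  AddMonoidAlgebra.mapDomain (fun v : Fin n → ℚ => ∑ i : Fin n, v i • w i) F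

/-- `IsMFRes t n r δ lam` : in the embedding `X = A_r < Y` (the classical group of type
`t` and rank `n`) given by the irreducible representation of highest weight `δ`, the
restriction to `X` of the irreducible `Y`-module of highest weight `lam` is
multiplicity-free: its character is a sum of *distinct* irreducible characters of `X`. -/
def IsMFRes (t : CType) (n r : ℕ) (δ : Fin r → ℕ) (lam : Fin n → ℕ) : Prop :=
  ∀ w, WtSys t n r δ w → ∀ f, IsCharY t n lam f →
    ∃ c : (Fin r → ℕ) →₀ ℕ, Decomp r (resChar w f) c ∧ ∀ μ, c μ ≤ 1

/-- The operation `e^v ↦ e^{k·v}` on characters (Adams operation on the torus),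
used to express symmetric and exterior powers of characters. -/
def pw {m : ℕ} (k : ℕ) (F : CharRing m) : CharRing m :=
  AddMonoidAlgebra.mapDomain (fun v : Fin m → ℚ => (k : ℚ) • v) F

/-- The irreducible `A_r`-module of highest weight `d` carries a nonzero invariant
*symmetric* bilinear form, i.e. the trivial module occurs in its symmetric square
(whose character `S` satisfies `2S = f² + f^{[2]}`). -/
def HasSymForm (r : ℕ) (d : Fin r → ℕ) : Prop :=
  ∀ f, IsCharA r d f →
    ∃ c : (Fin r → ℕ) →₀ ℕ,
      (f * f + pw 2 f) * altA r (rhoA r)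
          = c.sum (fun μ k => ((2 * k : ℕ) : ℤ) • altA r (slWt r μ + rhoA r)) ∧ 1 ≤ c 0

/-- The irreducible `A_r`-module of highest weight `d` carries a nonzero invariant
*alternating* bilinear form, i.e. the trivial module occurs in its exterior square
(whose character `Λ` satisfies `2Λ = f² - f^{[2]}`). -/
def HasAltForm (r : ℕ) (d : Fin r → ℕ) : Prop :=
  ∀ f, IsCharA r d f →
    ∃ c : (Fin r → ℕ) →₀ ℕ,
      (f * f - pw 2 f) * altA r (rhoA r)
          = c.sum (fun μ k => ((2 * k : ℕ) : ℤ) • altA r (slWt r μ + rhoA r)) ∧ 1 ≤ c 0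

end MFPaper

open MFPaper


section RepPart

theorem trace_sub_quot {V : Type} [AddCommGroup V] [Module ℚ V] [FiniteDimensional ℚ V]
    (W : Submodule ℚ V) (f : V →ₗ[ℚ] V) (h : W ≤ W.comap f) :
    LinearMap.trace ℚ V f = LinearMap.trace ℚ W (f.restrict h)
      + LinearMap.trace ℚ (V ⧸ W) (W.mapQ W f h) := by
  obtain ⟨s, hs⟩ := LinearMap.exists_rightInverse_of_surjective W.mkQ (by simp)
  have hks : ∀ y, W.mkQ (s y) = y := fun y => by
    have := LinearMap.congr_fun hs y
    simpa using this
  let r : V →ₗ[ℚ] W := LinearMap.codRestrict W (LinearMap.id - s ∘ₗ W.mkQ) (by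
    intro v
    refine (Submodule.Quotient.mk_eq_zero W).mp ?_
    change W.mkQ _ = 0
    simp only [LinearMap.sub_apply, LinearMap.id_apply, LinearMap.comp_apply, map_sub, hks, sub_self])
  have hdec : f = (f ∘ₗ W.subtype) ∘ₗ r + (f ∘ₗ s) ∘ₗ W.mkQ := by
    ext v
    simp [r, LinearMap.codRestrict]
  have h1 : r ∘ₗ (f ∘ₗ W.subtype) = f.restrict h := by
    ext v
    have : W.mkQ (f v) = 0 := by
      rw [← LinearMap.mem_ker, Submodule.ker_mkQ]; exact h v.2
    simp only [r, LinearMap.comp_apply, LinearMap.codRestrict_apply, LinearMap.sub_apply,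
      Submodule.subtype_apply, this, map_zero, sub_zero, LinearMap.id_apply,
      LinearMap.coe_restrict_apply]
  have h2 : W.mkQ ∘ₗ (f ∘ₗ s) = W.mapQ W f h := by
    apply LinearMap.ext
    intro y
    conv_rhs => rw [← hks y]
    simp
  conv_lhs => rw [hdec]
  rw [map_add, LinearMap.trace_comp_comm' r (f ∘ₗ W.subtype), LinearMap.trace_comp_comm' W.mkQ (f ∘ₗ s), h1, h2]

theorem cancel_reps {G : Type} [Group G] (N : ℕ) : ∀ (V W : Type) [AddCommGroup V] [Module ℚ V]
    [FiniteDimensional ℚ V] [AddCommGroup W] [Module ℚ W] [FiniteDimensional ℚ W]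
    (A : Representation ℚ G V) (B : Representation ℚ G W), Module.finrank ℚ V ≤ N →
    ∃ (V' W' : Type) (_ : AddCommGroup V') (_ : Module ℚ V') (_ : FiniteDimensional ℚ V')
      (_ : AddCommGroup W') (_ : Module ℚ W') (_ : FiniteDimensional ℚ W')
      (A' : Representation ℚ G V') (B' : Representation ℚ G W'),
      (∀ g, A.character g - B.character g = A'.character g - B'.character g) ∧
      Subsingleton (A'.IntertwiningMap B') := by
  induction N with
  | zero =>
    intro V W _ _ _ _ _ _ A B h
    refine ⟨V, W, inferInstance, inferInstance, inferInstance, inferInstance, inferInstance, inferInstance, A, B, fun _ => rfl, ?_⟩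
    have : Subsingleton V := (Module.finrank_zero_iff (R := ℚ)).mp (by omega)
    constructor
    intro a b
    ext v
    rw [Subsingleton.elim v 0]; simp
  | succ N ih =>
    intro V W _ _ _ _ _ _ A B h
    by_cases hs : Subsingleton (A.IntertwiningMap B)
    · exact ⟨V, W, inferInstance, inferInstance, inferInstance, inferInstance, inferInstance, inferInstance, A, B, fun _ => rfl, hs⟩
    have hne : ∃ φ : A.IntertwiningMap B, φ.toLinearMap ≠ 0 := by
      by_contra hc
      push Not at hc
      apply hs
      constructor
      intro a b
      have := (hc a).trans (hc b).symm
      ext v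
      exact LinearMap.congr_fun this v
    obtain ⟨φ, hφ⟩ := hne
    have hcomm : ∀ g v, φ.toLinearMap (A g v) = B g (φ.toLinearMap v) := fun g v =>
      LinearMap.congr_fun (φ.isIntertwining' g) v
    set K := LinearMap.ker φ.toLinearMap with hK
    set R := LinearMap.range φ.toLinearMap with hR
    have hKc : ∀ g, K ≤ K.comap (A g) := by
      intro g v hv
      rw [hK, LinearMap.mem_ker] at hv
      simp only [Submodule.mem_comap, hK, LinearMap.mem_ker, hcomm, hv, map_zero]
    have hRc : ∀ g, R ≤ R.comap (B g) := by
      rintro g _ ⟨v, rfl⟩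
      exact ⟨A g v, hcomm g v⟩
    have hlt : Module.finrank ℚ K < Module.finrank ℚ V := by
      apply Submodule.finrank_lt
      intro ht
      exact hφ (LinearMap.ker_eq_top.mp ht)
    obtain ⟨V', W', i1, i2, i3, i4, i5, i6, A', B', h1, h2⟩ :=
      ih K (W ⧸ R) (A.subrepresentation K hKc) (B.quotient R hRc) (by omega)
    refine ⟨V', W', i1, i2, i3, i4, i5, i6, A', B', ?_, h2⟩
    intro g
    rw [← h1 g]
    have e1 : A.character g = (A.subrepresentation K hKc).character g + (A.quotient K hKc).character g :=
      trace_sub_quot K (A g) (hKc g)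
    have e2 : B.character g = (B.subrepresentation R hRc).character g + (B.quotient R hRc).character g :=
      trace_sub_quot R (B g) (hRc g)
    have e3 : (A.quotient K hKc).character g = (B.subrepresentation R hRc).character g := by
      have E : (A.quotient K hKc).Equiv (B.subrepresentation R hRc) :=
        Representation.Equiv.mk (φ.toLinearMap.quotKerEquivRange) (by
          intro g
          apply Submodule.linearMap_qext
          ext v
          have := hcomm g v
          exact this)
      rw [Representation.char_iso E]
    rw [e1, e2, e3]; ring

theorem exists_rep_of_norm_one {G : Type} [Group G] [Fintype G] {V W : Type} [AddCommGroup V] [Module ℚ V]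
    [FiniteDimensional ℚ V] [AddCommGroup W] [Module ℚ W] [FiniteDimensional ℚ W]
    (A : Representation ℚ G V) (B : Representation ℚ G W)
    (hn : ∑ g : G, (A.character g - B.character g) * (A.character g⁻¹ - B.character g⁻¹)
      = Fintype.card G)
    (h0 : 0 ≤ A.character 1 - B.character 1) :
    ∃ (d : ℕ) (P : G →* Matrix (Fin d) (Fin d) ℚ),
      ∀ g, (P g).trace = A.character g - B.character g := by
  obtain ⟨V', W', i1, i2, i3, i4, i5, i6, A', B', h1, h2⟩ := cancel_reps _ V W A B le_rfl
  simp only [h1] at hn h0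
  have hG : (Nat.card G : ℚ) ≠ 0 := by
    rw [Nat.card_eq_fintype_card]; exact_mod_cast Fintype.card_ne_zero
  let _ : Invertible (Nat.card G : ℚ) := invertibleOfNonzero hG
  have kAB : ∑ g : G, B'.character g * A'.character g⁻¹ = 0 := by
    have := Representation.card_inv_mul_sum_char_mul_char_eq_finrank A' B'
    rw [Module.finrank_zero_of_subsingleton] at this
    rw [inv_mul_eq_iff_eq_mul₀ hG] at this
    simpa using this
  have kBA : ∑ g : G, A'.character g * B'.character g⁻¹ = 0 := by
    rw [← kAB]
    apply Fintype.sum_equiv (Equiv.inv G)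
    intro g; simp [mul_comm]
  have kAA := Representation.card_inv_mul_sum_char_mul_char_eq_finrank A' A'
  have kBB := Representation.card_inv_mul_sum_char_mul_char_eq_finrank B' B'
  rw [inv_mul_eq_iff_eq_mul₀ hG] at kAA kBB
  have hsum : Module.finrank ℚ (A'.IntertwiningMap A') + Module.finrank ℚ (B'.IntertwiningMap B') = 1 := by
    have : ∑ g : G, (A'.character g - B'.character g) * (A'.character g⁻¹ - B'.character g⁻¹)
      = ∑ g : G, A'.character g * A'.character g⁻¹ + ∑ g : G, B'.character g * B'.character g⁻¹
        - ∑ g : G, B'.character g * A'.character g⁻¹ - ∑ g : G, A'.character g * B'.character g⁻¹ := by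
      rw [← Finset.sum_add_distrib, ← Finset.sum_sub_distrib, ← Finset.sum_sub_distrib]
      apply Finset.sum_congr rfl; intros; ring
    rw [this, kAB, kBA, kAA, kBB] at hn
    rw [← Nat.card_eq_fintype_card] at hn
    have : (Nat.card G : ℚ) * (Module.finrank ℚ (A'.IntertwiningMap A') + Module.finrank ℚ (B'.IntertwiningMap B')) = Nat.card G * 1 := by
      linarith
    have := mul_left_cancel₀ hG this
    exact_mod_cast this
  have zero_of : ∀ {U : Type} [AddCommGroup U] [Module ℚ U] [FiniteDimensional ℚ U] (C : Representation ℚ G U),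
      Module.finrank ℚ (C.IntertwiningMap C) = 0 → Module.finrank ℚ U = 0 := by
    intro U _ _ _ C hC
    have : FiniteDimensional ℚ (C.IntertwiningMap C) :=
      Module.Finite.equiv (Representation.invariantsEquivIntertwiningMap C C)
    have hsub : Subsingleton (C.IntertwiningMap C) := Module.finrank_zero_iff.mp hC
    rw [Module.finrank_zero_iff]
    constructor
    have h : ∀ x : U, x = 0 := by
      intro x
      have := congrArg (fun f : C.IntertwiningMap C => f.toLinearMap x)
        (hsub.elim (⟨LinearMap.id, fun g => rfl⟩ : C.IntertwiningMap C) 0)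
      simpa using this
    intro a b; rw [h a, h b]
  have hB : Module.finrank ℚ W' = 0 := by
    rcases Nat.eq_zero_or_pos (Module.finrank ℚ (B'.IntertwiningMap B')) with h | h
    · exact zero_of B' h
    · have hA := zero_of A' (by omega)
      rw [Representation.char_one, Representation.char_one, hA] at h0
      have : (Module.finrank ℚ W' : ℚ) ≤ 0 := by simpa using h0
      exact_mod_cast le_antisymm this (by positivity)
  have hBc : ∀ g, B'.character g = 0 := by
    intro g
    have : Subsingleton W' := Module.finrank_zero_iff.mp hB
    have : B' g = 0 := by ext v; exact Subsingleton.elim _ _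
    rw [Representation.character, this, map_zero]
  let b := Module.finBasis ℚ V'
  refine ⟨_, ((LinearMap.toMatrixAlgEquiv b).toAlgHom.toRingHom.toMonoidHom).comp A', ?_⟩
  intro g
  rw [h1, hBc, sub_zero, Representation.character, LinearMap.trace_eq_matrix_trace ℚ b]
  rfl

/-- permutation representation -/
def permRep {G Y : Type} [Group G] (φ : G →* Equiv.Perm Y) : Representation ℚ G (Y → ℚ) where
  toFun g := LinearMap.funLeft ℚ ℚ (φ g⁻¹)
  map_one' := by ext; simp [LinearMap.funLeft]
  map_mul' a b := by ext; simp [LinearMap.funLeft]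

theorem permRep_char {G Y : Type} [Group G] [Fintype Y] [DecidableEq Y] (φ : G →* Equiv.Perm Y) (g : G) :
    (permRep φ).character g = (Finset.univ.filter (fun y => φ g⁻¹ y = y)).card := by
  rw [Representation.character, LinearMap.trace_eq_matrix_trace ℚ (Pi.basisFun ℚ Y), Matrix.trace]
  simp only [Matrix.diag, LinearMap.toMatrix_apply]
  simp [permRep, LinearMap.funLeft_apply, Pi.single_apply]

theorem sum_trace_nat {G ι : Type} [Group G] [Fintype G] [Fintype ι] [DecidableEq ι]
    (P : G →* Matrix ι ι ℚ) : ∃ n : ℕ, ∑ g, (P g).trace = (Fintype.card G : ℚ) * n := by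
  have hG : (Nat.card G : ℚ) ≠ 0 := by
    rw [Nat.card_eq_fintype_card]; exact_mod_cast Fintype.card_ne_zero
  let _ : Invertible (Nat.card G : ℚ) := invertibleOfNonzero hG
  let A : Representation ℚ G (ι → ℚ) := ((Matrix.toLinAlgEquiv' (R := ℚ) (n := ι)).toAlgHom.toRingHom.toMonoidHom).comp P
  refine ⟨Module.finrank ℚ A.invariants, ?_⟩
  have := Representation.card_inv_mul_sum_char_eq_finrank A
  rw [inv_mul_eq_iff_eq_mul₀ hG, Nat.card_eq_fintype_card] at this
  rw [← this]
  apply Finset.sum_congr rfl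
  intro g _
  exact (Matrix.trace_toLin'_eq (P g)).symm

end RepPart


set_option linter.unusedSectionVars false
section Coloring
variable {X Z : Type} [Fintype X] [DecidableEq X] [Fintype Z] [DecidableEq Z]

def cnt (c : X → Z) (z : Z) : ℕ := (Finset.univ.filter (fun x => c x = z)).card

theorem cnt_comp (c : X → Z) (π : Equiv.Perm X) : cnt (c ∘ π) = cnt c := by
  funext z
  unfold cnt
  apply Finset.card_bij (fun x _ => π x)
  · intro x hx; simpa using hx
  · intro a _ b _ h; exact π.injective h
  · intro b hb
    exact ⟨π.symm b, by simpa using hb, by simp⟩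

theorem cnt_sum (c : X → Z) : ∑ z, cnt c z = Fintype.card X := by
  unfold cnt
  rw [← Finset.card_eq_sum_card_fiberwise (fun x _ => by simp), Finset.card_univ]

theorem exists_cnt (γ : Z → ℕ) (h : ∑ z, γ z = Fintype.card X) : ∃ c : X → Z, cnt c = γ := by
  have e : X ≃ (Σ z, Fin (γ z)) := Fintype.equivOfCardEq (by simp [h])
  refine ⟨fun x => (e x).1, ?_⟩
  funext z
  unfold cnt
  rw [← Fintype.card_fin (γ z), ← Fintype.card_subtype]
  refine Fintype.card_congr ((e.subtypeEquiv (fun a => Iff.rfl)).trans (Equiv.sigmaSubtype z) )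

theorem exists_perm_of_cnt (c c0 : X → Z) (h : cnt c = cnt c0) : ∃ τ : Equiv.Perm X, c0 ∘ τ = c := by
  have e : ∀ z, {a // c a = z} ≃ {b // c0 b = z} := fun z =>
    Fintype.equivOfCardEq (by
      rw [Fintype.card_subtype, Fintype.card_subtype]; exact congrFun h z)
  exact ⟨Equiv.ofFiberEquiv e, funext fun a => Equiv.ofFiberEquiv_map e a⟩

theorem burnside {M : Type} [AddCommMonoid M] (F : (Z → ℕ) → M) :
    ∑ π : Equiv.Perm X, ∑ c : X → Z with c ∘ π = c, F (cnt c)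
      = (Fintype.card X).factorial • ∑ γ ∈ Finset.piAntidiag (Finset.univ : Finset Z) (Fintype.card X), F γ := by
  simp_rw [Finset.sum_filter]
  rw [Finset.sum_comm]
  have h1 : ∀ c : X → Z, (∑ π : Equiv.Perm X, if c ∘ π = c then F (cnt c) else 0)
      = (Finset.univ.filter (fun π : Equiv.Perm X => c ∘ π = c)).card • F (cnt c) := by
    intro c; rw [← Finset.sum_filter, Finset.sum_const]
  simp_rw [h1]
  have hm : ∀ c ∈ (Finset.univ : Finset (X → Z)), cnt c ∈ Finset.piAntidiag (Finset.univ : Finset Z) (Fintype.card X) := by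
    intro c _; simp [cnt_sum]
  rw [← Finset.sum_fiberwise_of_maps_to hm, Finset.smul_sum]
  apply Finset.sum_congr rfl
  intro γ hγ
  obtain ⟨c0, h0⟩ := exists_cnt (X := X) γ (by simpa using hγ)
  have h2 : ∀ c ∈ Finset.univ.filter (fun c : X → Z => cnt c = γ),
      (Finset.univ.filter (fun π : Equiv.Perm X => c ∘ π = c)).card • F (cnt c)
      = (Finset.univ.filter (fun π : Equiv.Perm X => c0 ∘ π = c)).card • F γ := by
    intro c hc
    have hc : cnt c = γ := by simpa using hc
    obtain ⟨τ, hτ⟩ := exists_perm_of_cnt c c0 (hc.trans h0.symm)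
    rw [hc]
    congr 1
    apply Finset.card_bij (fun π _ => τ * π)
    · intro π hπ
      have hπ : c ∘ π = c := by simpa using hπ
      simp only [Finset.mem_filter, Finset.mem_univ, true_and, Equiv.Perm.coe_mul]
      rw [← Function.comp_assoc, hτ, hπ]
    · intro a _ b _ h; exact mul_left_cancel h
    · intro b hb
      have hb : c0 ∘ b = c := by simpa using hb
      refine ⟨τ⁻¹ * b, ?_, by simp⟩
      simp only [Finset.mem_filter, Finset.mem_univ, true_and]
      rw [← hτ, Function.comp_assoc, ← Equiv.Perm.coe_mul]
      simp [hb, hτ]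
  rw [Finset.sum_congr rfl h2, ← Finset.sum_smul]
  congr 1
  rw [← Fintype.card_perm, ← Finset.card_univ]
  symm
  apply Finset.card_eq_sum_card_fiberwise
  intro π _
  simp [cnt_comp, h0]


def nmono {n : ℕ} (d : Fin n → ℕ) : CharRing n := mono (fun i => (d i : ℚ))

theorem mono_add {n : ℕ} (u v : Fin n → ℚ) : mono (u + v) = mono u * mono v := by
  simp [mono, AddMonoidAlgebra.single_mul_single]

theorem mono_zero {n : ℕ} : mono (0 : Fin n → ℚ) = 1 := rfl

theorem mono_sum {n : ℕ} {ι : Type} (s : Finset ι) (u : ι → Fin n → ℚ) :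
    mono (∑ i ∈ s, u i) = ∏ i ∈ s, mono (u i) := by
  classical
  induction s using Finset.induction_on with
  | empty => simp [mono_zero]
  | insert a s ha ih => rw [Finset.sum_insert ha, Finset.prod_insert ha, mono_add, ih]

theorem nmono_add {n : ℕ} (u v : Fin n → ℕ) : nmono (u + v) = nmono u * nmono v := by
  unfold nmono
  rw [← mono_add]; congr 1; funext i; simp

theorem nmono_zero {n : ℕ} : nmono (0 : Fin n → ℕ) = 1 := by
  unfold nmono
  rw [← mono_zero]; congr 1

theorem nmono_sum {n : ℕ} {ι : Type} (s : Finset ι) (u : ι → Fin n → ℕ) :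
    nmono (∑ i ∈ s, u i) = ∏ i ∈ s, nmono (u i) := by
  unfold nmono
  rw [← mono_sum]; congr 1; funext i; simp

def pX {n : ℕ} (π : Equiv.Perm X) : CharRing n :=
  ∑ c : X → Fin n with c ∘ π = c, nmono (cnt c)

def hsym {n : ℕ} (r : ℕ) : CharRing n :=
  ∑ d ∈ Finset.piAntidiag (Finset.univ : Finset (Fin n)) r, nmono d

/-- number of colorings of content `β` fixed by `π` -/
def fixc {n : ℕ} (π : Equiv.Perm X) (β : Fin n → ℕ) : ℕ :=
  (Finset.univ.filter (fun c : X → Fin n => c ∘ π = c ∧ cnt c = β)).card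

theorem cnt_fst {A B : Type} [Fintype A] [DecidableEq A] [Fintype B] [DecidableEq B] (c : X → A × B) (a : A) :
    cnt (fun x => (c x).1) a = ∑ b, cnt c (a, b) := by
  unfold cnt
  rw [Finset.card_eq_sum_card_fiberwise (f := fun x => (c x).2) (t := Finset.univ) (fun x _ => by simp)]
  apply Finset.sum_congr rfl
  intro b _
  rw [Finset.filter_filter]
  congr 1; ext x; simp [Prod.ext_iff]

theorem cnt_snd {A B : Type} [Fintype A] [DecidableEq A] [Fintype B] [DecidableEq B] (c : X → A × B) (b : B) :
    cnt (fun x => (c x).2) b = ∑ a, cnt c (a, b) := by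
  unfold cnt
  rw [Finset.card_eq_sum_card_fiberwise (f := fun x => (c x).1) (t := Finset.univ) (fun x _ => by simp)]
  apply Finset.sum_congr rfl
  intro b _
  rw [Finset.filter_filter]
  congr 1; ext x; simp [Prod.ext_iff, and_comm]

theorem burnside2 {n : ℕ} (β : Fin n → ℕ) (hβ : ∑ i, β i = Fintype.card X) :
    ∑ π : Equiv.Perm X, fixc π β • (pX π : CharRing n)
      = (Fintype.card X).factorial • ∏ i, hsym (β i) := by
  let F : (Fin n × Fin n → ℕ) → CharRing n := fun γ =>
    if (fun i => ∑ k, γ (i, k)) = β then nmono (fun k => ∑ i, γ (i, k)) else 0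
  have key := burnside (X := X) F
  have lhs : ∀ π : Equiv.Perm X, fixc π β • (pX π : CharRing n)
      = ∑ c : X → Fin n × Fin n with c ∘ π = c, F (cnt c) := by
    intro π
    have : ∀ c : X → Fin n × Fin n, F (cnt c) =
        if cnt (fun x => (c x).1) = β then nmono (cnt (fun x => (c x).2)) else 0 := by
      intro c
      have e1 : cnt (fun x => (c x).1) = fun i => ∑ k, cnt c (i, k) := funext (cnt_fst c)
      have e2 : cnt (fun x => (c x).2) = fun k => ∑ i, cnt c (i, k) := funext (cnt_snd c)
      rw [e1, e2]
    simp_rw [this]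
    rw [← Finset.sum_filter, Finset.filter_filter]
    unfold fixc pX
    rw [← Finset.sum_const, ← Finset.sum_product']
    apply Finset.sum_bij' (fun (p : (X → Fin n) × (X → Fin n)) _ => fun x => (p.1 x, p.2 x))
      (fun c _ => (fun x => (c x).1, fun x => (c x).2))
    · intro p hp
      simp only [Finset.mem_product, Finset.mem_filter, Finset.mem_univ, true_and] at hp ⊢
      refine ⟨?_, hp.1.2⟩
      funext x
      exact Prod.ext (congrFun hp.1.1 x) (congrFun hp.2 x)
    · intro c hc
      simp only [Finset.mem_product, Finset.mem_filter, Finset.mem_univ, true_and] at hc ⊢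
      refine ⟨⟨?_, hc.2⟩, ?_⟩
      · funext x; exact congrArg Prod.fst (congrFun hc.1 x)
      · funext x; exact congrArg Prod.snd (congrFun hc.1 x)
    · intro p hp; rfl
    · intro c hc; rfl
    · intro p hp; rfl
  rw [Finset.sum_congr rfl (fun π _ => lhs π), key]
  congr 1
  unfold hsym
  rw [Finset.prod_univ_sum]
  simp only [F]
  rw [← Finset.sum_filter]
  apply Finset.sum_bij' (fun (γ : Fin n × Fin n → ℕ) _ => fun i k => γ (i, k))
      (fun γ _ => fun p => γ p.1 p.2)
  · intro γ hγ
    simp only [Finset.mem_filter] at hγ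
    simp only [Fintype.mem_piFinset, Finset.mem_piAntidiag, Finset.mem_univ, implies_true, and_true]
    intro i; exact congrFun hγ.2 i
  · intro γ hγ
    simp only [Fintype.mem_piFinset, Finset.mem_piAntidiag, Finset.mem_univ, implies_true, and_true] at hγ
    simp only [Finset.mem_filter, Finset.mem_piAntidiag, Finset.mem_univ, implies_true, and_true]
    refine ⟨?_, funext hγ⟩
    rw [← Finset.univ_product_univ, Finset.sum_product, ← hβ]
    exact Finset.sum_congr rfl (fun i _ => hγ i)
  · intro γ _; rfl
  · intro γ _; rfl
  · intro γ _
    rw [← nmono_sum]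
    congr 1; funext k; simp

end Coloring


section JT
variable {m : ℕ}

def rhoN (m : ℕ) (i : Fin (m+1)) : ℕ := m - i

theorem rhoA_eq (m : ℕ) : rhoA m = fun i => (rhoN m i : ℚ) := by
  funext i
  unfold rhoA rhoN
  rw [Nat.cast_sub (by omega)]

def xv (k : Fin (m+1)) : CharRing (m+1) := nmono (Pi.single k 1)

theorem nmono_smul {n : ℕ} (r : ℕ) (d : Fin n → ℕ) : nmono (r • d) = nmono d ^ r := by
  induction r with
  | zero => simp [nmono_zero]
  | succ r ih => rw [add_smul, one_smul, nmono_add, ih, pow_succ]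

theorem nmono_eq_prod (d : Fin (m+1) → ℕ) : nmono d = ∏ k, xv k ^ d k := by
  unfold xv
  simp_rw [← nmono_smul]
  rw [← nmono_sum]
  congr 1
  funext i
  simp [Pi.single_apply]

theorem hsym_coeff (r : ℕ) : PowerSeries.coeff r (∏ k : Fin (m+1), PowerSeries.mk (fun r => xv k ^ r)) = hsym r := by
  rw [PowerSeries.coeff_prod]
  unfold hsym
  apply Finset.sum_bij' (fun (l : Fin (m+1) →₀ ℕ) _ => (l : Fin (m+1) → ℕ)) (fun d _ => Finsupp.equivFunOnFinite.symm d)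
  · intro l hl; simpa using hl
  · intro l hl; simpa using hl
  · intro l hl; ext; simp
  · intro l hl; ext; simp
  · intro l hl; simp [nmono_eq_prod]

def Epoly (k : Fin (m+1)) : Polynomial (CharRing (m+1)) :=
  ∏ l ∈ Finset.univ.erase k, (1 - Polynomial.C (xv l) * Polynomial.X)

theorem Epoly_deg (k : Fin (m+1)) : (Epoly k).natDegree ≤ m := by
  unfold Epoly
  refine (Polynomial.natDegree_prod_le _ _).trans ?_
  refine (Finset.sum_le_card_nsmul _ _ 1 ?_).trans ?_
  · intro l _
    compute_degree
  · simp

theorem geom_mul_one_sub (a : CharRing (m+1)) :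
    PowerSeries.mk (fun r => a ^ r) * (1 - PowerSeries.C a * PowerSeries.X) = 1 := by
  ext r
  cases r with
  | zero => simp [mul_sub]
  | succ r =>
    rw [mul_sub, mul_one, ← mul_assoc, map_sub, PowerSeries.coeff_succ_mul_X]
    simp [pow_succ]

theorem H_mul_E (k : Fin (m+1)) :
    (∏ l : Fin (m+1), PowerSeries.mk (fun r => xv l ^ r)) * (Epoly k : PowerSeries (CharRing (m+1)))
      = PowerSeries.mk (fun r => xv k ^ r) := by
  have : ((Epoly k : Polynomial (CharRing (m+1))) : PowerSeries (CharRing (m+1)))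
      = ∏ l ∈ Finset.univ.erase k, (1 - PowerSeries.C (xv l) * PowerSeries.X) := by
    unfold Epoly
    rw [← Polynomial.coeToPowerSeries.ringHom_apply, map_prod]
    simp
  rw [this, ← Finset.mul_prod_erase _ _ (Finset.mem_univ k), mul_assoc, ← Finset.prod_mul_distrib]
  rw [Finset.prod_eq_one, mul_one]
  intro l _
  exact geom_mul_one_sub _

def Hm (α : Fin (m+1) → ℕ) : Matrix (Fin (m+1)) (Fin (m+1)) (CharRing (m+1)) :=
  Matrix.of fun i j => if rhoN m j ≤ α i then hsym (α i - rhoN m j) else 0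

def Em : Matrix (Fin (m+1)) (Fin (m+1)) (CharRing (m+1)) :=
  Matrix.of fun j k => (Epoly k).coeff (rhoN m j)

def Am (α : Fin (m+1) → ℕ) : Matrix (Fin (m+1)) (Fin (m+1)) (CharRing (m+1)) :=
  Matrix.of fun i k => xv k ^ α i

theorem Hm_mul_Em (α : Fin (m+1) → ℕ) : Hm α * Em = Am α := by
  ext1 i k
  rw [Matrix.mul_apply]
  simp only [Hm, Em, Am, Matrix.of_apply]
  have h := congrArg (PowerSeries.coeff (α i)) (H_mul_E k)
  rw [PowerSeries.coeff_mul, PowerSeries.coeff_mk] at h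
  simp_rw [hsym_coeff, Polynomial.coeff_coe] at h
  rw [← h]
  have e1 : ∑ j : Fin (m+1), (if rhoN m j ≤ α i then hsym (α i - rhoN m j) else 0) * (Epoly k).coeff (rhoN m j)
      = ∑ t ∈ Finset.range (m+1), (if t ≤ α i then hsym (α i - t) else 0) * (Epoly k).coeff t := by
    rw [← Finset.sum_range_reflect, Finset.sum_range]
    apply Finset.sum_congr rfl
    intro j _
    have : m + 1 - 1 - (j : ℕ) = rhoN m j := by simp [rhoN]
    rw [this]
  rw [e1, ← Finset.Nat.sum_antidiagonal_swap, Finset.Nat.sum_antidiagonal_eq_sum_range_succ_mk]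
  simp only [Prod.swap]
  have e2 : ∑ t ∈ Finset.range (m+1), (if t ≤ α i then hsym (α i - t) else 0) * (Epoly k).coeff t
     = ∑ t ∈ Finset.range (m+1+α i), (if t ≤ α i then hsym (α i - t) else 0) * (Epoly k).coeff t := by
    apply Finset.sum_subset
    · intro t; simp; omega
    · intro t _ ht
      rw [Polynomial.coeff_eq_zero_of_natDegree_lt, mul_zero]
      have := Epoly_deg k
      simp at ht; omega
  have e3 : ∑ t ∈ Finset.range (α i).succ, hsym (α i - t) * (Epoly k).coeff t
     = ∑ t ∈ Finset.range (m+1+α i), (if t ≤ α i then hsym (α i - t) else 0) * (Epoly k).coeff t := by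
    rw [← Finset.sum_subset (s₁ := Finset.range (α i).succ) (s₂ := Finset.range (m+1+α i))
      (f := fun t => (if t ≤ α i then hsym (α i - t) else 0) * (Epoly k).coeff t)]
    · apply Finset.sum_congr rfl
      intro t ht
      rw [if_pos (by simp at ht; omega)]
    · intro t; simp; omega
    · intro t _ ht
      rw [if_neg (by simp at ht; omega), zero_mul]
  rw [e2, e3]

theorem hsym_zero : (hsym 0 : CharRing (m+1)) = 1 := by
  simp [hsym, nmono_zero]

theorem det_Hm_rho : (Hm (rhoN m)).det = 1 := by
  rw [Matrix.det_of_isUpperTriangular]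
  · apply Finset.prod_eq_one
    intro i _
    simp [Hm, hsym_zero]
  · intro i j hij
    have hij : j < i := hij
    simp only [Hm, Matrix.of_apply]
    rw [if_neg]
    unfold rhoN
    have := i.2
    simp only [not_le]
    omega

theorem det_Am (α : Fin (m+1) → ℕ) : (Am α).det = altA m (fun i => (α i : ℚ)) := by
  rw [Matrix.det_apply]
  unfold altA
  apply Finset.sum_congr rfl
  intro σ _
  change _ = _ • nmono (fun i => α (σ i))
  rw [nmono_eq_prod]
  rfl

theorem jacobi_trudi (α : Fin (m+1) → ℕ) :
    (Hm α).det * altA m (rhoA m) = altA m (fun i => (α i : ℚ)) := by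
  rw [rhoA_eq, ← det_Am, ← det_Am, ← Hm_mul_Em α, ← Hm_mul_Em (rhoN m), Matrix.det_mul, Matrix.det_mul,
    det_Hm_rho, one_mul]

variable {X : Type} [Fintype X] [DecidableEq X]

def chi (l : Fin (m+1) → ℕ) (π : Equiv.Perm X) : ℤ :=
  ∑ w : Equiv.Perm (Fin (m+1)), ((Equiv.Perm.sign w : ℤˣ) : ℤ) *
    (Finset.univ.filter (fun c : X → Fin (m+1) => c ∘ π = c ∧ ∀ i, cnt c i + rhoN m (w i) = l i)).card

theorem chi_coeff (l : Fin (m+1) → ℕ) (π : Equiv.Perm X) :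
    (pX π * altA m (rhoA m)).coeff (fun i => (l i : ℚ)) = chi l π := by
  unfold pX altA chi
  rw [Finset.mul_sum, AddMonoidAlgebra.coeff_sum, Finsupp.finsetSum_apply]
  apply Finset.sum_congr rfl
  intro w _
  rw [mul_smul_comm, Finset.sum_mul, AddMonoidAlgebra.coeff_smul, AddMonoidAlgebra.coeff_sum, Finsupp.smul_apply,
    Finsupp.finsetSum_apply, smul_eq_mul]
  congr 1
  rw [← Finset.filter_filter, Finset.card_filter]
  push_cast
  apply Finset.sum_congr rfl
  intro c _
  unfold nmono
  rw [← mono_add, mono, AddMonoidAlgebra.coeff_single_apply, rhoA_eq]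
  apply if_congr _ rfl rfl
  rw [funext_iff]
  apply forall_congr'
  intro i
  simp only [Pi.add_apply]
  norm_cast

theorem frob_formula (l : Fin (m+1) → ℕ) (hl : ∑ i, l i = Fintype.card X + ∑ i, rhoN m i) :
    (∑ π : Equiv.Perm X, chi l π • (pX π : CharRing (m+1))) * altA m (rhoA m)
      = (Fintype.card X).factorial • altA m (fun i => (l i : ℚ)) := by
  rw [← jacobi_trudi, ← smul_mul_assoc]
  congr 1
  rw [← Matrix.det_transpose, Matrix.det_apply, Finset.smul_sum]
  unfold chi
  simp_rw [Finset.sum_smul]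
  rw [Finset.sum_comm]
  apply Finset.sum_congr rfl
  intro w _
  simp_rw [mul_smul]
  rw [← Finset.smul_sum, Units.smul_def, smul_comm (Fintype.card X).factorial]
  congr 1
  simp only [Matrix.transpose_apply, Hm, Matrix.of_apply]
  by_cases h : ∀ i, rhoN m (w i) ≤ l i
  · have e : ∀ π : Equiv.Perm X, (Finset.univ.filter (fun c : X → Fin (m+1) => c ∘ π = c ∧ ∀ i, cnt c i + rhoN m (w i) = l i)).card
       = fixc π (fun i => l i - rhoN m (w i)) := by
      intro π
      unfold fixc
      congr 1
      ext c
      simp only [Finset.mem_filter, Finset.mem_univ, true_and, funext_iff]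
      apply and_congr Iff.rfl
      apply forall_congr'
      intro i
      have := h i
      omega
    simp_rw [e]
    have := burnside2 (X := X) (fun i => l i - rhoN m (w i)) (by
      have h1 : ∑ i, (l i - rhoN m (w i)) + ∑ i, rhoN m (w i) = ∑ i, l i := by
        rw [← Finset.sum_add_distrib]
        exact Finset.sum_congr rfl (fun i _ => Nat.sub_add_cancel (h i))
      rw [Equiv.sum_comp w (rhoN m)] at h1
      omega)
    simp_rw [Nat.cast_smul_eq_nsmul]
    rw [this]
    congr 1
    apply Finset.prod_congr rfl
    intro i _
    rw [if_pos (h i)]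
  · push Not at h
    obtain ⟨i, hi⟩ := h
    rw [Finset.prod_eq_zero (Finset.mem_univ i) (if_neg (by omega)), smul_zero]
    apply Finset.sum_eq_zero
    intro π _
    rw [Finset.card_eq_zero.mpr]
    · simp
    · rw [Finset.filter_eq_empty_iff]
      rintro c _ ⟨_, hc⟩
      have := hc i
      omega

end JT


section CharPart
variable {m : ℕ}

def permAdd {n : ℕ} (σ : Equiv.Perm (Fin n)) : (Fin n → ℚ) →+ (Fin n → ℚ) where
  toFun v := fun i => v (σ i)
  map_zero' := rfl
  map_add' _ _ := rfl

def act {n : ℕ} (σ : Equiv.Perm (Fin n)) : CharRing n →+* CharRing n :=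
  AddMonoidAlgebra.mapDomainRingHom ℤ (permAdd σ)

theorem act_mono {n : ℕ} (σ : Equiv.Perm (Fin n)) (v : Fin n → ℚ) :
    act σ (mono v) = mono (fun i => v (σ i)) :=
  AddMonoidAlgebra.mapDomain_single

theorem act_coeff {n : ℕ} (σ : Equiv.Perm (Fin n)) (F : CharRing n) (u : Fin n → ℚ) :
    (act σ F).coeff (fun i => u (σ i)) = F.coeff u := by
  change Finsupp.mapDomain (permAdd σ) F.coeff (permAdd σ u) = _
  apply Finsupp.mapDomain_apply
  intro a b h
  funext i
  have := congrFun h (σ.symm i)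
  simpa [permAdd] using this

def SymF {n : ℕ} (F : CharRing n) : Prop := ∀ σ, act σ F = F
def Anti {n : ℕ} (F : CharRing n) : Prop := ∀ σ, act σ F = ((Equiv.Perm.sign σ : ℤˣ) : ℤ) • F

theorem SymF.mul_anti {n : ℕ} {F G : CharRing n} (hF : SymF F) (hG : Anti G) : Anti (F * G) := by
  intro σ
  rw [map_mul, hF, hG, mul_smul_comm]

theorem SymF.mul {n : ℕ} {F G : CharRing n} (hF : SymF F) (hG : SymF G) : SymF (F * G) := by
  intro σ
  rw [map_mul, hF, hG]

theorem anti_altA (v : Fin (m+1) → ℚ) : Anti (altA m v) := by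
  intro σ
  unfold altA
  rw [map_sum, Finset.smul_sum]
  apply Fintype.sum_equiv (Equiv.mulRight σ)
  intro τ
  rw [map_zsmul, act_mono, smul_smul]
  congr 1
  simp only [Equiv.coe_mulRight, Equiv.Perm.sign_mul, Units.val_mul]
  rw [mul_left_comm, ← Units.val_mul, Int.units_mul_self]; simp

theorem Anti.coeff {n : ℕ} {F : CharRing n} (h : Anti F) (σ : Equiv.Perm (Fin n)) (u : Fin n → ℚ) :
    F.coeff (fun i => u (σ i)) = ((Equiv.Perm.sign σ : ℤˣ) : ℤ) * F.coeff u := by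
  have h1 := act_coeff σ F u
  rw [h σ, AddMonoidAlgebra.coeff_smul, Finsupp.smul_apply, smul_eq_mul] at h1
  rw [← h1, ← mul_assoc, ← Units.val_mul, Int.units_mul_self]; simp

theorem Anti.coeff_eq_zero {n : ℕ} {F : CharRing n} (h : Anti F) {u : Fin n → ℚ} {i j : Fin n} (hij : i ≠ j)
    (hu : u i = u j) : F.coeff u = 0 := by
  have := h.coeff (Equiv.swap i j) u
  rw [Equiv.Perm.sign_swap hij] at this
  have e : (fun k => u (Equiv.swap i j k)) = u := by
    funext k
    rcases eq_or_ne k i with rfl | h1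
    · simp [hu]
    · rcases eq_or_ne k j with rfl | h2
      · simp [hu]
      · rw [Equiv.swap_apply_of_ne_of_ne h1 h2]
  rw [e] at this
  simp at this
  omega

theorem altA_coeff' (v u : Fin (m+1) → ℚ) : (altA m v).coeff u =
    ∑ σ : Equiv.Perm (Fin (m+1)), ((Equiv.Perm.sign σ : ℤˣ) : ℤ) * (if (fun i => v (σ i)) = u then 1 else 0) := by
  unfold altA
  rw [AddMonoidAlgebra.coeff_sum, Finsupp.finsetSum_apply]
  apply Finset.sum_congr rfl
  intro σ _
  rw [AddMonoidAlgebra.coeff_smul, Finsupp.smul_apply, smul_eq_mul, mono, AddMonoidAlgebra.coeff_single,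
    Finsupp.single_apply]

theorem perm_eq_one_of_anti {v : Fin (m+1) → ℚ} (hv : StrictAnti v) {σ : Equiv.Perm (Fin (m+1))}
    (h : StrictAnti (fun i => v (σ i))) : σ = 1 := by
  rw [← Equiv.Perm.monotone_iff]
  apply StrictMono.monotone
  intro i j hij
  have := h hij
  exact hv.lt_iff_gt.mp this

theorem altA_coeff (v u : Fin (m+1) → ℚ) (hv : StrictAnti v) (hu : StrictAnti u) : (altA m v).coeff u =
    if v = u then 1 else 0 := by
  rw [altA_coeff', Finset.sum_eq_single 1]
  · simp only [Equiv.Perm.sign_one, Units.val_one, one_mul]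
    rfl
  · intro σ _ hσ
    rw [if_neg, mul_zero]
    intro h
    exact hσ (perm_eq_one_of_anti hv (h ▸ hu))
  · simp

theorem rhoA_anti : StrictAnti (rhoA m) := by
  intro i j hij
  unfold rhoA
  have : (i : ℕ) < (j : ℕ) := hij
  have : ((i : ℕ) : ℚ) < ((j : ℕ) : ℚ) := by exact_mod_cast this
  linarith

variable {X : Type} [Fintype X] [DecidableEq X]

theorem nat_anti {l : Fin (m+1) → ℕ} (h : StrictAnti l) : StrictAnti (fun i => (l i : ℚ)) := by
  intro i j hij
  have := h hij
  simp only
  exact_mod_cast this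

theorem chi_inv (l : Fin (m+1) → ℕ) (π : Equiv.Perm X) : chi l π⁻¹ = chi l π := by
  unfold chi
  apply Finset.sum_congr rfl
  intro w _
  congr 3
  ext c
  simp only [Finset.mem_filter, Finset.mem_univ, true_and]
  apply and_congr _ Iff.rfl
  constructor
  · intro h; conv_lhs => rw [← h]
    rw [Function.comp_assoc, ← Equiv.Perm.coe_mul]; simp
  · intro h; conv_lhs => rw [← h]
    rw [Function.comp_assoc, ← Equiv.Perm.coe_mul]; simp

theorem chi_norm (l : Fin (m+1) → ℕ) (h : StrictAnti l) (hl : ∑ i, l i = Fintype.card X + ∑ i, rhoN m i) :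
    ∑ π : Equiv.Perm X, chi l π * chi l π⁻¹ = (Fintype.card X).factorial := by
  have := congrArg (fun F : CharRing (m+1) => F.coeff (fun i => (l i : ℚ))) (frob_formula (X := X) l hl)
  simp only [Finset.sum_mul, AddMonoidAlgebra.coeff_sum, Finsupp.finsetSum_apply, smul_mul_assoc,
    AddMonoidAlgebra.coeff_smul, Finsupp.smul_apply, chi_coeff, altA_coeff _ _ (nat_anti h) (nat_anti h)] at this
  simpa [chi_inv] using this

theorem cnt_eq_sum (c : X → Fin (m+1)) : cnt c = ∑ x, Pi.single (c x) 1 := by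
  funext k
  unfold cnt
  rw [Finset.card_filter, Finset.sum_apply]
  apply Finset.sum_congr rfl
  intro x _
  simp [Pi.single_apply, eq_comm]

theorem pX_one : (pX (1 : Equiv.Perm X) : CharRing (m+1)) = (∑ k, xv k) ^ Fintype.card X := by
  unfold pX
  rw [← Finset.card_univ, ← Finset.prod_const, Finset.prod_univ_sum]
  simp only [Equiv.Perm.coe_one, Function.comp_id, Finset.filter_true, Fintype.piFinset_univ]
  apply Finset.sum_congr rfl
  intro c _
  rw [cnt_eq_sum, nmono_sum]
  rfl

theorem sym_sum_xv : SymF (∑ k, xv k : CharRing (m+1)) := by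
  intro σ
  rw [map_sum]
  apply Fintype.sum_equiv σ⁻¹
  intro k
  unfold xv nmono
  rw [act_mono]
  congr 1
  funext i
  simp [Pi.single_apply, Equiv.eq_symm_apply]

theorem anti_pow (N : ℕ) : Anti ((∑ k, xv k) ^ N * altA m (rhoA m)) := by
  apply SymF.mul_anti _ (anti_altA _)
  intro σ
  rw [map_pow, sym_sum_xv]

theorem pow_coeff_nonneg (N : ℕ) : ∀ z : Fin (m+1) → ℤ, StrictAnti z →
    0 ≤ ((∑ k, xv k) ^ N * altA m (rhoA m)).coeff (fun i => (z i : ℚ)) := by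
  induction N with
  | zero =>
    intro z hz
    rw [pow_zero, one_mul, altA_coeff _ _ rhoA_anti]
    · split_ifs <;> simp
    · intro i j hij
      have := hz hij
      simp only
      exact_mod_cast this
  | succ N ih =>
    intro z hz
    rw [pow_succ', mul_assoc, Finset.sum_mul, AddMonoidAlgebra.coeff_sum, Finsupp.finsetSum_apply]
    apply Finset.sum_nonneg
    intro k _
    unfold xv nmono mono
    rw [AddMonoidAlgebra.coeff_single_mul_apply, one_mul]
    have e : (-(fun i => (((Pi.single k 1 : Fin (m+1) → ℕ) i : ℕ) : ℚ)) + fun i => (z i : ℚ))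
        = fun i => (((z i - (Pi.single k (1:ℤ) : Fin (m+1) → ℤ) i : ℤ)) : ℚ) := by
      funext i
      by_cases h : i = k
      · subst h; simp; ring
      · simp [h]
    rw [e]
    by_cases hinj : StrictAnti (fun i => z i - (Pi.single k (1:ℤ) : Fin (m+1) → ℤ) i)
    · exact ih _ hinj
    · have : ∃ i j, i ≠ j ∧ z i - (Pi.single k (1:ℤ) : Fin (m+1) → ℤ) i = z j - (Pi.single k (1:ℤ) : Fin (m+1) → ℤ) j := by
        by_contra hc
        push Not at hc
        apply hinj
        intro i j hij
        have h1 := hc i j hij.ne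
        have h2 := hz hij
        have h3 : (Pi.single k (1:ℤ) : Fin (m+1) → ℤ) i = 0 ∨ (Pi.single k (1:ℤ) : Fin (m+1) → ℤ) i = 1 := by
          by_cases h : i = k <;> simp [h]
        have h4 : (Pi.single k (1:ℤ) : Fin (m+1) → ℤ) j = 0 ∨ (Pi.single k (1:ℤ) : Fin (m+1) → ℤ) j = 1 := by
          by_cases h : j = k <;> simp [h]
        simp only
        omega
      obtain ⟨i, j, hij, he⟩ := this
      exact le_of_eq ((anti_pow N).coeff_eq_zero hij (congrArg (fun t : ℤ => (t : ℚ)) he)).symm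

theorem chi_one_nonneg (l : Fin (m+1) → ℕ) (h : StrictAnti l) : 0 ≤ chi l (1 : Equiv.Perm X) := by
  rw [← chi_coeff, pX_one]
  have := pow_coeff_nonneg (m := m) (Fintype.card X) (fun i => (l i : ℤ)) (by
    intro i j hij; have := h hij; simpa using this)
  simpa using this

def YY (X : Type) [Fintype X] [DecidableEq X] (l : Fin (m+1) → ℕ) (s : ℤˣ) : Type :=
  {p : Equiv.Perm (Fin (m+1)) × (X → Fin (m+1)) // Equiv.Perm.sign p.1 = s ∧ ∀ i, cnt p.2 i + rhoN m (p.1 i) = l i}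

instance (l : Fin (m+1) → ℕ) (s : ℤˣ) : Fintype (YY X l s) := by unfold YY; infer_instance
instance (l : Fin (m+1) → ℕ) (s : ℤˣ) : DecidableEq (YY X l s) := by unfold YY; infer_instance

def YYact (l : Fin (m+1) → ℕ) (s : ℤˣ) : Equiv.Perm X →* Equiv.Perm (YY X l s) where
  toFun g := 
    { toFun := fun y => ⟨(y.1.1, y.1.2 ∘ (g⁻¹ : Equiv.Perm X)), y.2.1, by intro i; rw [cnt_comp]; exact y.2.2 i⟩
      invFun := fun y => ⟨(y.1.1, y.1.2 ∘ g), y.2.1, by intro i; rw [cnt_comp]; exact y.2.2 i⟩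
      left_inv := fun y => by apply Subtype.ext; simp [Function.comp_def]
      right_inv := fun y => by apply Subtype.ext; simp [Function.comp_def] }
  map_one' := rfl
  map_mul' a b := rfl

theorem YY_char (l : Fin (m+1) → ℕ) (s : ℤˣ) (g : Equiv.Perm X) :
    (permRep (YYact (X := X) l s)).character g = 
    ∑ w : Equiv.Perm (Fin (m+1)), if Equiv.Perm.sign w = s then
    ((Finset.univ.filter (fun c : X → Fin (m+1) => c ∘ g = c ∧ ∀ i, cnt c i + rhoN m (w i) = l i)).card : ℚ) else 0 := by
  rw [permRep_char]
  have : (Finset.univ.filter (fun y : YY X l s => YYact l s g⁻¹ y = y)).card =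
     ∑ w : Equiv.Perm (Fin (m+1)), if Equiv.Perm.sign w = s then
    (Finset.univ.filter (fun c : X → Fin (m+1) => c ∘ g = c ∧ ∀ i, cnt c i + rhoN m (w i) = l i)).card else 0 := by
    rw [← Finset.sum_filter, ← Finset.card_sigma]
    apply Finset.card_bij (fun y _ => ⟨y.1.1, y.1.2⟩)
    · intro y hy
      simp only [Finset.mem_filter, Finset.mem_univ, true_and] at hy
      have h2 : y.1.2 ∘ g = y.1.2 := by
        have := congrArg (fun z : YY X l s => z.1.2) hy
        exact this
      simp only [Finset.mem_sigma, Finset.mem_filter, Finset.mem_univ, true_and]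
      exact ⟨y.2.1, h2, y.2.2⟩
    · intro a _ b _ h
      apply Subtype.ext
      have h := Sigma.mk.inj_iff.mp h
      exact Prod.ext h.1 (eq_of_heq h.2)
    · rintro ⟨w, c⟩ hb
      simp only [Finset.mem_sigma, Finset.mem_filter, Finset.mem_univ, true_and] at hb
      refine ⟨⟨(w, c), hb.1, hb.2.2⟩, ?_, rfl⟩
      refine Finset.mem_filter.mpr ⟨Finset.mem_univ _, ?_⟩
      apply Subtype.ext
      apply Prod.ext
      · rfl
      · exact hb.2.1
  rw [this]
  push_cast
  rfl

theorem YY_diff (l : Fin (m+1) → ℕ) (g : Equiv.Perm X) :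
    (permRep (YYact (X := X) l 1)).character g - (permRep (YYact (X := X) l (-1))).character g = chi l g := by
  rw [YY_char, YY_char, ← Finset.sum_sub_distrib]
  unfold chi
  push_cast
  apply Finset.sum_congr rfl
  intro w _
  rcases Int.units_eq_one_or (Equiv.Perm.sign w) with h | h
  · simp [h]
  · simp [h]

theorem exists_chi_rep (l : Fin (m+1) → ℕ) (h : StrictAnti l) (hl : ∑ i, l i = Fintype.card X + ∑ i, rhoN m i) :
    ∃ (d : ℕ) (P : Equiv.Perm X →* Matrix (Fin d) (Fin d) ℚ), ∀ g, (P g).trace = chi l g := by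
  obtain ⟨d, P, hP⟩ := exists_rep_of_norm_one (permRep (YYact (X := X) l 1)) (permRep (YYact (X := X) l (-1))) (by
    simp_rw [YY_diff]
    rw [Fintype.card_perm]
    exact_mod_cast chi_norm l h hl) (by
    rw [YY_diff]
    exact_mod_cast chi_one_nonneg l h)
  exact ⟨d, P, fun g => by rw [hP, YY_diff]⟩

end CharPart


set_option linter.unusedSectionVars false
set_option linter.unusedSimpArgs false
section Wreath
variable {m : ℕ} {κ : Type} [Fintype κ] [DecidableEq κ]

theorem sum_fin3 {ι A : Type} [Fintype ι] [AddCommMonoid A] (F : (Fin 3 → ι) → A) :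
    ∑ i, F i = ∑ a, ∑ b, ∑ c, F ![a, b, c] := by
  rw [← Finset.sum_product', ← Finset.sum_product']
  symm
  apply Finset.sum_bij' (fun (p : (ι × ι) × ι) _ => ![p.1.1, p.1.2, p.2]) (fun i _ => ((i 0, i 1), i 2))
  · simp
  · simp
  · rintro ⟨⟨a, b⟩, c⟩ _; simp
  · intro i _; funext a; fin_cases a <;> rfl
  · intro p _; rfl

/-- generalized trace -/
def gtr {ι A : Type} [Fintype ι] [CommRing A] (τ : Equiv.Perm (Fin 3)) (N : Fin 3 → Matrix ι ι A) : A :=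
  ∑ i : Fin 3 → ι, ∏ a, N a (i a) (i (τ⁻¹ a))

abbrev cyc : Equiv.Perm (Fin 3) := Equiv.swap 0 1 * Equiv.swap 1 2

theorem gtr_one {ι A : Type} [Fintype ι] [CommRing A] (N : Fin 3 → Matrix ι ι A) :
    gtr 1 N = (N 0).trace * (N 1).trace * (N 2).trace := by
  unfold gtr
  rw [sum_fin3]
  simp only [Fin.prod_univ_three, Matrix.trace, Matrix.diag, inv_one, Equiv.Perm.one_apply]
  simp [← Finset.mul_sum, ← Finset.sum_mul]

theorem gtr_s01 {ι A : Type} [Fintype ι] [CommRing A] (N : Fin 3 → Matrix ι ι A) :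
    gtr (Equiv.swap 0 1) N = (N 0 * N 1).trace * (N 2).trace := by
  unfold gtr
  rw [sum_fin3]
  have h0 : (Equiv.swap 0 1 : Equiv.Perm (Fin 3))⁻¹ 0 = 1 := by decide
  have h1 : (Equiv.swap 0 1 : Equiv.Perm (Fin 3))⁻¹ 1 = 0 := by decide
  have h2 : (Equiv.swap 0 1 : Equiv.Perm (Fin 3))⁻¹ 2 = 2 := by decide
  simp only [Fin.prod_univ_three, Matrix.trace, Matrix.diag, Matrix.mul_apply, h0, h1, h2]
  simp [← Finset.mul_sum, ← Finset.sum_mul]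

theorem gtr_s02 {ι A : Type} [Fintype ι] [CommRing A] (N : Fin 3 → Matrix ι ι A) :
    gtr (Equiv.swap 0 2) N = (N 0 * N 2).trace * (N 1).trace := by
  unfold gtr
  rw [sum_fin3]
  have h0 : (Equiv.swap 0 2 : Equiv.Perm (Fin 3))⁻¹ 0 = 2 := by decide
  have h1 : (Equiv.swap 0 2 : Equiv.Perm (Fin 3))⁻¹ 1 = 1 := by decide
  have h2 : (Equiv.swap 0 2 : Equiv.Perm (Fin 3))⁻¹ 2 = 0 := by decide
  simp only [Fin.prod_univ_three, Matrix.trace, Matrix.diag, Matrix.mul_apply, h0, h1, h2]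
  rw [Finset.sum_mul]
  apply Finset.sum_congr rfl; intro a _
  rw [Finset.sum_mul_sum, Finset.sum_comm]
  apply Finset.sum_congr rfl; intro b _
  apply Finset.sum_congr rfl; intro c _
  simp; ring

theorem gtr_s12 {ι A : Type} [Fintype ι] [CommRing A] (N : Fin 3 → Matrix ι ι A) :
    gtr (Equiv.swap 1 2) N = (N 1 * N 2).trace * (N 0).trace := by
  unfold gtr
  rw [sum_fin3]
  have h0 : (Equiv.swap 1 2 : Equiv.Perm (Fin 3))⁻¹ 0 = 0 := by decide
  have h1 : (Equiv.swap 1 2 : Equiv.Perm (Fin 3))⁻¹ 1 = 2 := by decide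
  have h2 : (Equiv.swap 1 2 : Equiv.Perm (Fin 3))⁻¹ 2 = 1 := by decide
  rw [mul_comm]
  simp only [Fin.prod_univ_three, Matrix.trace, Matrix.diag, Matrix.mul_apply, h0, h1, h2]
  simp [mul_assoc, ← Finset.mul_sum, ← Finset.sum_mul]

theorem gtr_cyc {ι A : Type} [Fintype ι] [CommRing A] (N : Fin 3 → Matrix ι ι A) :
    gtr cyc N = (N 0 * N 2 * N 1).trace := by
  unfold gtr
  rw [sum_fin3]
  have h0 : cyc⁻¹ 0 = 2 := by decide
  have h1 : cyc⁻¹ 1 = 0 := by decide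
  have h2 : cyc⁻¹ 2 = 1 := by decide
  simp only [Fin.prod_univ_three, Matrix.trace, Matrix.diag, Matrix.mul_apply, h0, h1, h2]
  simp only [Finset.mul_sum, Finset.sum_mul]
  apply Finset.sum_congr rfl; intro a _
  apply Finset.sum_congr rfl; intro b _
  apply Finset.sum_congr rfl; intro c _
  simp; ring

theorem gtr_cyc' {ι A : Type} [Fintype ι] [CommRing A] (N : Fin 3 → Matrix ι ι A) :
    gtr cyc⁻¹ N = (N 0 * N 1 * N 2).trace := by
  unfold gtr
  rw [sum_fin3]
  have h0 : cyc⁻¹⁻¹ 0 = 1 := by decide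
  have h1 : cyc⁻¹⁻¹ 1 = 2 := by decide
  have h2 : cyc⁻¹⁻¹ 2 = 0 := by decide
  simp only [Fin.prod_univ_three, Matrix.trace, Matrix.diag, Matrix.mul_apply, h0, h1, h2]
  simp only [Finset.mul_sum, Finset.sum_mul]
  apply Finset.sum_congr rfl; intro a _
  rw [Finset.sum_comm]
  apply Finset.sum_congr rfl; intro b _
  apply Finset.sum_congr rfl; intro c _
  simp

theorem sum_perm3 {A : Type} [AddCommMonoid A] (F : Equiv.Perm (Fin 3) → A) :
    ∑ τ, F τ = F 1 + F (Equiv.swap 0 1) + F (Equiv.swap 0 2) + F (Equiv.swap 1 2) + F cyc + F cyc⁻¹ := by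
  have : (Finset.univ : Finset (Equiv.Perm (Fin 3))) =
    {1, Equiv.swap 0 1, Equiv.swap 0 2, Equiv.swap 1 2, cyc, cyc⁻¹} := by decide
  rw [this, Finset.sum_insert (by decide), Finset.sum_insert (by decide), Finset.sum_insert (by decide),
    Finset.sum_insert (by decide), Finset.sum_insert (by decide), Finset.sum_singleton]
  simp only [add_assoc]

/-- the coloring matrices -/
def Bm (σ : Equiv.Perm κ) : Matrix (κ → Fin (m+1)) (κ → Fin (m+1)) (CharRing (m+1)) :=
  Matrix.of fun c c' => if c ∘ σ = c' then nmono (cnt c) else 0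

theorem pw_sum {n : ℕ} {ι : Type} (k : ℕ) (s : Finset ι) (F : ι → CharRing n) : pw k (∑ i ∈ s, F i) = ∑ i ∈ s, pw k (F i) :=
  map_sum (AddMonoidHom.mk' (pw k : CharRing n → CharRing n) (fun a b => AddMonoidAlgebra.mapDomain_add _ a b)) F s

theorem pw_nmono {n : ℕ} (k : ℕ) (d : Fin n → ℕ) : pw k (nmono d) = nmono d ^ k := by
  rw [← nmono_smul]
  unfold pw nmono mono
  rw [AddMonoidAlgebra.mapDomain_single]
  congr 1; funext i; simp

theorem Bm_trace1 (a : Equiv.Perm κ) : (Bm a : Matrix _ _ (CharRing (m+1))).trace = pX a := by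
  unfold Bm pX
  simp [Matrix.trace, Finset.sum_filter]

theorem Bm_trace2 (a b : Equiv.Perm κ) : (Bm a * Bm b : Matrix _ _ (CharRing (m+1))).trace = pw 2 (pX (a * b)) := by
  unfold pX
  rw [pw_sum, Finset.sum_filter]
  simp only [Bm, Matrix.trace, Matrix.diag, Matrix.mul_apply, Matrix.of_apply]
  apply Finset.sum_congr rfl
  intro c _
  rw [Finset.sum_eq_single (c ∘ a)]
  · simp only [if_true, cnt_comp, Function.comp_assoc, Equiv.Perm.coe_mul, pw_nmono]
    split_ifs <;> simp [pow_two]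
  · intro d _ hd
    rw [if_neg (Ne.symm hd), zero_mul]
  · simp

theorem Bm_mul_apply (a b : Equiv.Perm κ) (c d) : (Bm a * Bm b : Matrix _ _ (CharRing (m+1))) c d =
    if c ∘ (a * b : Equiv.Perm κ) = d then nmono (cnt c) ^ 2 else 0 := by
  simp only [Bm, Matrix.mul_apply, Matrix.of_apply]
  rw [Finset.sum_eq_single (c ∘ a)]
  · simp only [if_true, cnt_comp, Function.comp_assoc, Equiv.Perm.coe_mul]
    rw [mul_ite, mul_zero, pow_two]
    congr
  · intro d _ hd
    rw [if_neg (Ne.symm hd), zero_mul]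
  · simp

theorem Bm_trace3 (a b c : Equiv.Perm κ) : (Bm a * Bm b * Bm c : Matrix _ _ (CharRing (m+1))).trace = pw 3 (pX (a * b * c)) := by
  unfold pX
  rw [pw_sum, Finset.sum_filter]
  simp only [Matrix.trace, Matrix.diag]
  apply Finset.sum_congr rfl
  intro d _
  rw [Matrix.mul_apply, Finset.sum_eq_single (d ∘ (a * b : Equiv.Perm κ))]
  · rw [Bm_mul_apply, if_pos rfl]
    simp only [Bm, Matrix.of_apply, cnt_comp, pw_nmono]
    rw [mul_ite, mul_zero, pow_succ (nmono (cnt d)) 2]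
    rfl
  · intro e _ he
    rw [Bm_mul_apply, if_neg (Ne.symm he), zero_mul]
  · simp

abbrev Wr (κ : Type) := (Fin 3 → Equiv.Perm κ) ⋊[(mulAutArrow : Equiv.Perm (Fin 3) →* MulAut (Fin 3 → Equiv.Perm κ))] Equiv.Perm (Fin 3)

theorem Wr_mul_left (g h : Wr κ) (a : Fin 3) : (g * h).left a = g.left a * h.left (g.right⁻¹ a) := rfl

def wrAct : Wr κ →* Equiv.Perm (Fin 3 × κ) := 
  MonoidHom.toHomPerm
  { toFun := fun g p => (g.right p.1, g.left (g.right p.1) p.2)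
    map_one' := by funext p; rfl
    map_mul' := by
      intro g h
      funext p
      change ((g * h).right p.1, (g * h).left ((g * h).right p.1) p.2) = _
      rw [Wr_mul_left]
      simp
      rfl }

theorem wrAct_apply (g : Wr κ) (p : Fin 3 × κ) : wrAct g p = (g.right p.1, g.left (g.right p.1) p.2) := rfl

theorem cnt_curry {n : ℕ} (C : Fin 3 × κ → Fin n) (z : Fin n) : cnt C z = ∑ a, cnt (fun x => C (a, x)) z := by
  unfold cnt
  simp only [Finset.card_filter]
  rw [← Finset.univ_product_univ, Finset.sum_product]

theorem pX_wr (g : Wr κ) : (pX (wrAct g) : CharRing (m+1)) = gtr g.right (fun a => Bm (g.left a)) := by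
  unfold gtr pX
  rw [Finset.sum_filter]
  apply Fintype.sum_equiv (Equiv.curry (Fin 3) κ (Fin (m+1)))
  intro C
  simp only [Bm, Matrix.of_apply]
  have hc : (C ∘ wrAct g = C) ↔ ∀ a, (fun x => C (a, x)) ∘ g.left a = fun x => C (g.right⁻¹ a, x) := by
    rw [funext_iff]
    constructor
    · intro h a
      funext x
      have := h (g.right⁻¹ a, x)
      simpa [wrAct_apply] using this
    · rintro h ⟨a, x⟩
      have := congrFun (h (g.right a)) x
      simpa [wrAct_apply] using this
  by_cases h : C ∘ wrAct g = C
  · rw [if_pos h]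
    rw [hc] at h
    have : cnt C = ∑ a, cnt (fun x => C (a, x)) := by
      funext z; rw [cnt_curry, Finset.sum_apply]
    rw [this, nmono_sum]
    apply Finset.prod_congr rfl
    intro a _
    exact (if_pos (h a)).symm
  · rw [if_neg h]
    rw [hc] at h
    push Not at h
    obtain ⟨a, ha⟩ := h
    exact (Finset.prod_eq_zero (Finset.mem_univ a) (if_neg ha)).symm

def Mrep {d : ℕ} (P : Equiv.Perm κ →* Matrix (Fin d) (Fin d) ℚ) : Wr κ →* Matrix (Fin 3 → Fin d) (Fin 3 → Fin d) ℚ where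
  toFun g := Matrix.of fun i j => ∏ a, P (g.left a) (i a) (j (g.right⁻¹ a))
  map_one' := by
    ext i j
    simp only [Matrix.of_apply, SemidirectProduct.one_left, SemidirectProduct.one_right, Pi.one_apply, map_one, inv_one,
      Equiv.Perm.one_apply, Matrix.one_apply]
    by_cases h : i = j
    · simp [h]
    · rw [if_neg h]
      obtain ⟨a, ha⟩ := Function.ne_iff.mp h
      exact Finset.prod_eq_zero (Finset.mem_univ a) (if_neg ha)
  map_mul' g h := by
    ext i j
    rw [Matrix.mul_apply]
    simp only [Matrix.of_apply, Wr_mul_left, map_mul, Matrix.mul_apply]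
    rw [Finset.prod_univ_sum]
    simp only [Fintype.piFinset_univ]
    apply Fintype.sum_equiv (Equiv.arrowCongr g.right⁻¹ (Equiv.refl _))
    intro q
    have hq : ∀ a, (Equiv.arrowCongr g.right⁻¹ (Equiv.refl (Fin d))) q (g.right⁻¹ a) = q a := by
      intro a
      simp only [Equiv.arrowCongr_apply, Function.comp, Equiv.refl_apply, Equiv.symm_apply_apply]
    rw [Finset.prod_mul_distrib]
    congr 1
    · apply Finset.prod_congr rfl
      intro a _
      rw [hq]
    · apply Fintype.prod_equiv g.right⁻¹
      intro a
      rw [hq]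
      simp

theorem Mrep_trace {d : ℕ} (P : Equiv.Perm κ →* Matrix (Fin d) (Fin d) ℚ) (g : Wr κ) :
    (Mrep P g).trace = gtr g.right (fun a => P (g.left a)) := by
  simp [Mrep, gtr, Matrix.trace]

end Wreath


set_option linter.unusedSectionVars false
section Wreath2
variable {m : ℕ} {κ : Type} [Fintype κ] [DecidableEq κ]

instance : Fintype (Wr κ) := Fintype.ofEquiv _ SemidirectProduct.equivProd.symm

theorem Wr_card : Fintype.card (Wr κ) = (Fintype.card κ).factorial ^ 3 * 6 := by
  rw [Fintype.card_congr SemidirectProduct.equivProd, Fintype.card_prod, Fintype.card_pi]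
  simp [Fintype.card_perm, Nat.factorial]

theorem Wr_sum {A : Type} [AddCommMonoid A] (F : Wr κ → A) :
    ∑ h, F h = ∑ τ : Equiv.Perm (Fin 3), ∑ σ : Fin 3 → Equiv.Perm κ, F ⟨σ, τ⟩ := by
  rw [Finset.sum_comm, ← Finset.sum_product']
  apply Fintype.sum_equiv SemidirectProduct.equivProd
  intro h; rfl

theorem trace_mul_rep {G ι ι' : Type} [Group G] [Fintype ι] [DecidableEq ι] [Fintype ι'] [DecidableEq ι']
    (P : G →* Matrix ι ι ℚ) (Q : G →* Matrix ι' ι' ℚ) :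
    ∃ T : G →* Matrix (ι × ι') (ι × ι') ℚ, ∀ g, (T g).trace = (P g).trace * (Q g).trace := by
  refine ⟨⟨⟨fun g => Matrix.kronecker (P g) (Q g), ?_⟩, ?_⟩, ?_⟩
  · simp only [map_one]; exact Matrix.one_kronecker_one
  · intro a b
    simp only [map_mul]; exact Matrix.mul_kronecker_mul _ _ _ _
  · intro g
    exact Matrix.trace_kronecker _ _

theorem pw_zsmul {n : ℕ} (k : ℕ) (z : ℤ) (F : CharRing n) : pw k (z • F) = z • pw k F :=
  map_zsmul (AddMonoidHom.mk' (pw k : CharRing n → CharRing n) (fun a b => AddMonoidAlgebra.mapDomain_add _ a b)) z F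

theorem sum_mul_eq {G A : Type} [Group G] [Fintype G] [AddCommMonoid A] (f : G → A) :
    ∑ a, ∑ b, f (a * b) = Fintype.card G • ∑ g, f g := by
  have : ∀ a, ∑ b, f (a * b) = ∑ g, f g := fun a => Fintype.sum_equiv (Equiv.mulLeft a) _ _ (fun b => rfl)
  simp [this]

theorem E_one (χ : Equiv.Perm κ → ℤ) (p : Equiv.Perm κ → CharRing (m+1)) :
    ∑ a, ∑ b, ∑ c, (χ a * χ b * χ c) • (p a * p b * p c) = (∑ a, χ a • p a) * (∑ a, χ a • p a) * (∑ a, χ a • p a) := by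
  rw [Finset.sum_mul_sum, Finset.sum_mul]
  apply Finset.sum_congr rfl; intro a _
  rw [Finset.sum_mul]
  apply Finset.sum_congr rfl; intro b _
  rw [Finset.mul_sum]
  apply Finset.sum_congr rfl; intro c _
  simp only [zsmul_eq_mul]; push_cast; ring

theorem E_two (χ : Equiv.Perm κ → ℤ) (p q : Equiv.Perm κ → CharRing (m+1)) :
    ∑ a, ∑ b, ∑ c, (χ (a * b) * χ c) • (q (a * b) * p c)
      = (Fintype.card κ).factorial • ((∑ a, χ a • q a) * (∑ a, χ a • p a)) := by
  have : ∀ g, ∑ c, (χ g * χ c) • (q g * p c) = (χ g • q g) * ∑ c, χ c • p c := by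
    intro g
    rw [Finset.mul_sum]
    apply Finset.sum_congr rfl; intro c _
    simp only [zsmul_eq_mul]; push_cast; ring
  rw [sum_mul_eq (fun g => ∑ c, (χ g * χ c) • (q g * p c)), Fintype.card_perm]
  simp_rw [this]
  rw [Finset.sum_mul]

theorem E_three (χ : Equiv.Perm κ → ℤ) (q : Equiv.Perm κ → CharRing (m+1)) :
    ∑ a, ∑ b, ∑ c, (χ (a * b * c)) • (q (a * b * c))
      = (Fintype.card κ).factorial • (Fintype.card κ).factorial • (∑ a, χ a • q a) := by
  rw [sum_mul_eq (fun g => ∑ c, (χ (g * c)) • (q (g * c))), Fintype.card_perm, sum_mul_eq (fun g => χ g • q g),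
    Fintype.card_perm]

/-- the coefficient functional -/
def Lf (l : Fin (m+1) → ℕ) : CharRing (m+1) →+ ℚ where
  toFun F := ((F * altA m (rhoA m)).coeff (fun i => (l i : ℚ)) : ℤ)
  map_zero' := by simp
  map_add' a b := by rw [add_mul, AddMonoidAlgebra.coeff_add, Finsupp.add_apply]; push_cast; rfl

theorem altA_rho_ne : altA m (rhoA m) ≠ 0 := by
  intro h
  have := altA_coeff (m := m) _ _ rhoA_anti rhoA_anti
  rw [h] at this
  simp at this

theorem wreath_int {ι : Type} [Fintype ι] [DecidableEq ι] (U : Equiv.Perm (Fin 3) →* Matrix ι ι ℚ)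
    (l l' : Fin (m+1) → ℕ) (h : StrictAnti l) (h' : StrictAnti l')
    (hl : ∑ i, l i = Fintype.card κ + ∑ i, rhoN m i) 
    (hl' : ∑ i, l' i = 3 * Fintype.card κ + ∑ i, rhoN m i)
    (s : CharRing (m+1)) (hs : s * altA m (rhoA m) = altA m (fun i => (l i : ℚ)))  :
    ∃ n : ℕ, (U 1).trace * Lf l' (s * s * s) + (U (Equiv.swap 0 1)).trace * Lf l' (pw 2 s * s)
      + (U (Equiv.swap 0 2)).trace * Lf l' (pw 2 s * s) + (U (Equiv.swap 1 2)).trace * Lf l' (pw 2 s * s)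
      + (U cyc).trace * Lf l' (pw 3 s) + (U cyc⁻¹).trace * Lf l' (pw 3 s) = 6 * n := by
  obtain ⟨d, P, hP⟩ := exists_chi_rep (X := κ) l h hl
  obtain ⟨d', Q, hQ⟩ := exists_chi_rep (X := Fin 3 × κ) l' h' (by rw [hl']; simp)
  obtain ⟨T, hT⟩ := trace_mul_rep (Mrep P) (Q.comp wrAct)
  obtain ⟨T', hT'⟩ := trace_mul_rep (U.comp SemidirectProduct.rightHom) T
  obtain ⟨n, hn⟩ := sum_trace_nat T'
  refine ⟨n, ?_⟩
  set k := (Fintype.card κ).factorial with hk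
  set S := ∑ π : Equiv.Perm κ, chi l π • (pX π : CharRing (m+1)) with hS
  have hSs : S = (k : ℤ) • s := by
    apply mul_right_cancel₀ (altA_rho_ne (m := m))
    rw [frob_formula l hl, smul_mul_assoc, hs, natCast_zsmul]
  have hk0 : (k : ℚ) ≠ 0 := by exact_mod_cast Nat.factorial_ne_zero _
  have hLz : ∀ (z : ℤ) F, Lf l' (z • F) = (z : ℚ) * Lf l' F := by
    intro z F; rw [map_zsmul, zsmul_eq_mul]
  have hLn : ∀ (z : ℕ) F, Lf l' (z • F) = (z : ℚ) * Lf l' F := by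
    intro z F; rw [map_nsmul, nsmul_eq_mul]
  have hterm : ∀ (τ : Equiv.Perm (Fin 3)) (σ : Fin 3 → Equiv.Perm κ), (T' ⟨σ, τ⟩).trace =
      (U τ).trace * (gtr τ (fun a => P (σ a)) * Lf l' (gtr τ (fun a => Bm (σ a)))) := by
    intro τ σ
    rw [hT', hT, Mrep_trace]
    simp only [MonoidHom.comp_apply]
    rw [hQ, ← chi_coeff, pX_wr]
    rfl
  have hpw : ∀ j, ∑ π : Equiv.Perm κ, chi l π • pw j (pX π : CharRing (m+1)) = (k : ℤ) • pw j s := by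
    intro j
    rw [← pw_zsmul, ← hSs, hS, pw_sum]
    simp_rw [pw_zsmul]
  rw [Wr_sum, sum_perm3, Wr_card] at hn
  simp_rw [hterm, ← Finset.mul_sum] at hn
  simp_rw [sum_fin3] at hn
  simp only [gtr_one, gtr_s01, gtr_s02, gtr_s12, gtr_cyc, gtr_cyc', Matrix.cons_val_zero, Matrix.cons_val_one,
    Matrix.cons_val_two, Matrix.head_cons, Matrix.tail_cons, Matrix.cons_val, Bm_trace1, Bm_trace2, Bm_trace3, ← map_mul, hP] at hn
  have c1 : ∑ a : Equiv.Perm κ, ∑ b : Equiv.Perm κ, ∑ c : Equiv.Perm κ,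
      (chi l a : ℚ) * chi l b * chi l c * Lf l' (pX a * pX b * pX c) = (k:ℚ)^3 * Lf l' (s * s * s) := by
    have := congrArg (Lf l') (E_one (chi l) (fun π : Equiv.Perm κ => (pX π : CharRing (m+1))))
    simp only [map_sum, hLz, ← hS] at this
    push_cast at this
    rw [this, hSs]
    simp only [smul_mul_assoc, mul_smul_comm, hLz]
    push_cast; ring
  have c2 := congrArg (Lf l') (E_two (chi l) (fun π : Equiv.Perm κ => (pX π : CharRing (m+1))) (fun π => pw 2 (pX π)))
  simp only [map_sum, hLz, hLn, ← hS, hpw, hSs, smul_mul_assoc, mul_smul_comm] at c2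
  push_cast at c2
  have c3 := congrArg (Lf l') (E_three (chi l) (fun π : Equiv.Perm κ => (pw 3 (pX π) : CharRing (m+1))))
  simp only [map_sum, hLz, hLn, hpw] at c3
  push_cast at c3
  rw [← hk] at c2 c3
  have c2' : ∑ a : Equiv.Perm κ, ∑ b : Equiv.Perm κ, ∑ c : Equiv.Perm κ,
      (chi l (a * c) : ℚ) * chi l b * Lf l' (pw 2 (pX (a * c)) * pX b) = (k:ℚ)^3 * Lf l' (pw 2 s * s) := by
    rw [Finset.sum_congr rfl (fun a _ => Finset.sum_comm), c2]; ring
  have c2'' : ∑ a : Equiv.Perm κ, ∑ b : Equiv.Perm κ, ∑ c : Equiv.Perm κ,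
      (chi l (b * c) : ℚ) * chi l a * Lf l' (pw 2 (pX (b * c)) * pX a) = (k:ℚ)^3 * Lf l' (pw 2 s * s) := by
    rw [Finset.sum_comm, Finset.sum_congr rfl (fun a _ => Finset.sum_comm), c2]; ring
  have c3' : ∑ a : Equiv.Perm κ, ∑ b : Equiv.Perm κ, ∑ c : Equiv.Perm κ,
      (chi l (a * c * b) : ℚ) * Lf l' (pw 3 (pX (a * c * b))) = (k:ℚ)^3 * Lf l' (pw 3 s) := by
    rw [Finset.sum_congr rfl (fun a _ => Finset.sum_comm), c3]; ring
  rw [c1, c2, c2', c2'', c3, c3'] at hn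
  push_cast at hn
  have hk3 : (k : ℚ)^3 ≠ 0 := pow_ne_zero _ hk0
  apply mul_left_cancel₀ hk3
  linear_combination hn

def sgnRep : Equiv.Perm (Fin 3) →* Matrix (Fin 1) (Fin 1) ℚ where
  toFun τ := Matrix.of fun _ _ => (((Equiv.Perm.sign τ : ℤˣ) : ℤ) : ℚ)
  map_one' := by ext i j; rw [Subsingleton.elim i j]; simp
  map_mul' a b := by ext i j; simp [Matrix.mul_apply]

def stdRep : Equiv.Perm (Fin 3) →* Matrix (Fin 3) (Fin 3) ℚ where
  toFun τ := Matrix.of fun i j => if τ j = i then 1 else 0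
  map_one' := by ext i j; simp [Matrix.one_apply, eq_comm]
  map_mul' a b := by
    ext i j
    simp [Matrix.mul_apply]
    congr

theorem wreath_g 
    (l l' : Fin (m+1) → ℕ) (h : StrictAnti l) (h' : StrictAnti l')
    (hl : ∑ i, l i = Fintype.card κ + ∑ i, rhoN m i) 
    (hl' : ∑ i, l' i = 3 * Fintype.card κ + ∑ i, rhoN m i)
    (s : CharRing (m+1)) (hs : s * altA m (rhoA m) = altA m (fun i => (l i : ℚ)))  :
    ∃ n : ℕ, Lf l' (s * s * s) - 3 * Lf l' (pw 2 s * s) + 2 * Lf l' (pw 3 s) = 6 * n := by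
  obtain ⟨n, hn⟩ := wreath_int sgnRep l l' h h' hl hl' s hs
  refine ⟨n, ?_⟩
  rw [← hn]
  have e1 : Equiv.Perm.sign (Equiv.swap (0 : Fin 3) 1) = -1 := by decide
  have e2 : Equiv.Perm.sign (Equiv.swap (0 : Fin 3) 2) = -1 := by decide
  have e3 : Equiv.Perm.sign (Equiv.swap (1 : Fin 3) 2) = -1 := by decide
  simp [sgnRep, Matrix.trace, e1, e2, e3]
  ring

theorem wreath_hf 
    (l l' : Fin (m+1) → ℕ) (h : StrictAnti l) (h' : StrictAnti l')
    (hl : ∑ i, l i = Fintype.card κ + ∑ i, rhoN m i) 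
    (hl' : ∑ i, l' i = 3 * Fintype.card κ + ∑ i, rhoN m i)
    (s : CharRing (m+1)) (hs : s * altA m (rhoA m) = altA m (fun i => (l i : ℚ)))  :
    ∃ n : ℕ, 3 * Lf l' (s * s * s) - 3 * Lf l' (pw 2 s * s) = 6 * n := by
  obtain ⟨U, hU⟩ := trace_mul_rep sgnRep stdRep
  obtain ⟨n, hn⟩ := wreath_int U l l' h h' hl hl' s hs
  refine ⟨n, ?_⟩
  rw [← hn]
  simp only [hU]
  have e1 : Equiv.Perm.sign (Equiv.swap (0 : Fin 3) 1) = -1 := by decide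
  have e2 : Equiv.Perm.sign (Equiv.swap (0 : Fin 3) 2) = -1 := by decide
  have e3 : Equiv.Perm.sign (Equiv.swap (1 : Fin 3) 2) = -1 := by decide
  have t1 : (stdRep 1).trace = 3 := by simp
  have t2 : (stdRep (Equiv.swap 0 1)).trace = 1 := by
    simp [stdRep, Matrix.trace, Fin.sum_univ_three, Equiv.swap_apply_def]
  have t3 : (stdRep (Equiv.swap 0 2)).trace = 1 := by
    simp [stdRep, Matrix.trace, Fin.sum_univ_three, Equiv.swap_apply_def]
  have t4 : (stdRep (Equiv.swap 1 2)).trace = 1 := by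
    simp [stdRep, Matrix.trace, Fin.sum_univ_three, Equiv.swap_apply_def]
  have a0 : cyc 0 = 1 := by decide
  have a1 : cyc 1 = 2 := by decide
  have a2 : cyc 2 = 0 := by decide
  have b0 : cyc⁻¹ 0 = 2 := by decide
  have b1 : cyc⁻¹ 1 = 0 := by decide
  have b2 : cyc⁻¹ 2 = 1 := by decide
  have t5 : (stdRep cyc).trace = 0 := by
    simp only [stdRep, Matrix.trace, Fin.sum_univ_three, Matrix.diag, MonoidHom.coe_mk, OneHom.coe_mk, Matrix.of_apply, a0, a1, a2]
    simp
  have t6 : (stdRep cyc⁻¹).trace = 0 := by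
    simp only [stdRep, Matrix.trace, Fin.sum_univ_three, Matrix.diag, MonoidHom.coe_mk, OneHom.coe_mk, Matrix.of_apply, b0, b1, b2]
    simp
  rw [t1, t2, t3, t4, t5, t6]
  simp [sgnRep, Matrix.trace, e1, e2, e3]
  ring

end Wreath2


section Supp
variable {m n : ℕ}

theorem supp_mul {F G : CharRing n} {u} (h : (F * G).coeff u ≠ 0) :
    ∃ a b, u = a + b ∧ F.coeff a ≠ 0 ∧ G.coeff b ≠ 0 := by
  classical
  have h1 := AddMonoidAlgebra.support_coeff_mul_subset F G (Finsupp.mem_support_iff.2 h)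
  obtain ⟨a, ha, b, hb, rfl⟩ := Finset.mem_add.1 h1
  exact ⟨a, b, rfl, Finsupp.mem_support_iff.1 ha, Finsupp.mem_support_iff.1 hb⟩

theorem pw_coeff (k : ℕ) (hk : k ≠ 0) (F : CharRing n) (u : Fin n → ℚ) :
    (pw k F).coeff ((k : ℚ) • u) = F.coeff u := by
  change Finsupp.mapDomain (fun v : Fin n → ℚ => (k : ℚ) • v) F.coeff ((fun v : Fin n → ℚ => (k : ℚ) • v) u) = _
  apply Finsupp.mapDomain_apply
  intro a b h
  exact smul_right_injective _ (Nat.cast_ne_zero.2 hk) h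

theorem supp_pw {k : ℕ} (hk : k ≠ 0) {F : CharRing n} {u} (h : (pw k F).coeff u ≠ 0) :
    ∃ v, u = (k : ℚ) • v ∧ F.coeff v ≠ 0 := by
  have hk' : (k : ℚ) ≠ 0 := Nat.cast_ne_zero.2 hk
  have : u = (k : ℚ) • ((k : ℚ)⁻¹ • u) := by rw [smul_smul, mul_inv_cancel₀ hk', one_smul]
  refine ⟨_, this, ?_⟩
  rw [this, pw_coeff k hk] at h
  exact h

theorem pw_mul (k : ℕ) (F G : CharRing n) : pw k (F * G) = pw k F * pw k G :=
  map_mul (AddMonoidAlgebra.mapDomainRingHom ℤ (DistribSMul.toAddMonoidHom (Fin n → ℚ) (k : ℚ))) F G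

theorem pw_mono (k : ℕ) (v : Fin n → ℚ) : pw k (mono v) = mono ((k : ℚ) • v) :=
  AddMonoidAlgebra.mapDomain_single

theorem mono_mul_coeff (v u : Fin n → ℚ) (F : CharRing n) : (mono v * F).coeff (v + u) = F.coeff u := by
  unfold mono
  rw [AddMonoidAlgebra.coeff_single_mul_apply]; simp

theorem mul_mono_coeff (v u : Fin n → ℚ) (F : CharRing n) : (mono v * F).coeff u = F.coeff (u - v) := by
  conv_rhs => rw [← mono_mul_coeff v, add_sub_cancel]

def Sup (F : CharRing n) (N : ℕ) : Prop :=
  ∀ u, F.coeff u ≠ 0 → ∃ d : Fin n → ℕ, u = (fun i => (d i : ℚ)) ∧ ∑ i, d i = N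

theorem Sup.mul {F G : CharRing n} {N M : ℕ} (hF : Sup F N) (hG : Sup G M) : Sup (F * G) (N + M) := by
  intro u hu
  obtain ⟨a, b, rfl, ha, hb⟩ := supp_mul hu
  obtain ⟨d, rfl, hd⟩ := hF a ha
  obtain ⟨d', rfl, hd'⟩ := hG b hb
  refine ⟨d + d', ?_, ?_⟩
  · funext i; simp
  · simp [Finset.sum_add_distrib, hd, hd']

theorem Sup.pw {F : CharRing n} {N : ℕ} {k : ℕ} (hk : k ≠ 0) (hF : Sup F N) : Sup (pw k F) (k * N) := by
  intro u hu
  obtain ⟨v, rfl, hv⟩ := supp_pw hk hu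
  obtain ⟨d, rfl, hd⟩ := hF v hv
  refine ⟨k • d, ?_, ?_⟩
  · funext i; simp
  · simp [← Finset.mul_sum, hd]

theorem Sup.sum {ι : Type} (s : Finset ι) {F : ι → CharRing n} {N : ℕ} (h : ∀ i ∈ s, Sup (F i) N) : Sup (∑ i ∈ s, F i) N := by
  intro u hu
  rw [AddMonoidAlgebra.coeff_sum, Finsupp.finsetSum_apply] at hu
  obtain ⟨i, hi, h'⟩ := Finset.exists_ne_zero_of_sum_ne_zero hu
  exact h i hi u h'

theorem Sup.smul {F : CharRing n} {N : ℕ} (z : ℤ) (h : Sup F N) : Sup (z • F) N := by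
  intro u hu
  rw [AddMonoidAlgebra.coeff_smul, Finsupp.smul_apply] at hu
  exact h u (right_ne_zero_of_smul hu)

theorem Sup.add {F G : CharRing n} {N : ℕ} (h : Sup F N) (h' : Sup G N) : Sup (F + G) N := by
  intro u hu
  by_cases h1 : F.coeff u = 0
  · apply h'
    intro h2
    rw [AddMonoidAlgebra.coeff_add, Finsupp.add_apply, h1, h2] at hu
    simp at hu
  · exact h u h1

theorem Sup.of_smul {F : CharRing n} {N : ℕ} {z : ℤ} (hz : z ≠ 0) (h : Sup (z • F) N) : Sup F N := by
  intro u hu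
  apply h
  rw [AddMonoidAlgebra.coeff_smul, Finsupp.smul_apply]
  exact smul_ne_zero hz hu

theorem Sup.nmono (d : Fin n → ℕ) : Sup (nmono d) (∑ i, d i) := by
  intro u hu
  unfold _root_.nmono mono at hu
  rw [AddMonoidAlgebra.coeff_single, Finsupp.single_apply] at hu
  refine ⟨d, ?_, rfl⟩
  by_contra h
  exact hu (if_neg (fun h' => h h'.symm))

theorem Sup.altA (d : Fin (m+1) → ℕ) : Sup (altA m (fun i => (d i : ℚ))) (∑ i, d i) := by
  unfold MFPaper.altA
  apply Sup.sum
  intro σ _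
  apply Sup.smul
  have := Sup.nmono (fun i => d (σ i))
  rwa [Equiv.sum_comp σ d] at this

theorem Sup.char (k : ℕ) (l : Fin (m+1) → ℕ) (hl : ∑ i, l i = k + ∑ i, rhoN m i) (s : CharRing (m+1))
    (hs : s * MFPaper.altA m (rhoA m) = MFPaper.altA m (fun i => (l i : ℚ))) : Sup s k := by
  have h := frob_formula (X := Fin k) l (by simpa using hl)
  rw [← hs, ← smul_mul_assoc] at h
  have h2 := mul_right_cancel₀ altA_rho_ne h
  apply Sup.of_smul (z := (k.factorial : ℤ)) (by exact_mod_cast k.factorial_ne_zero)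
  have h3 : (k.factorial : ℤ) • s = ∑ π : Equiv.Perm (Fin k), chi l π • (pX π : CharRing (m+1)) := by
    rw [h2]; simp
  rw [h3]
  apply Sup.sum
  intro π _
  apply Sup.smul
  unfold pX
  apply Sup.sum
  intro c _
  have := Sup.nmono (cnt c)
  rwa [cnt_sum, Fintype.card_fin] at this

theorem SymF.pw {F : CharRing n} {k : ℕ} (hF : SymF F) : SymF (pw k F) := by
  intro σ
  conv_rhs => rw [← hF σ]
  have : ∀ F : CharRing n, act σ (MFPaper.pw k F) = MFPaper.pw k (act σ F) := by
    intro F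
    rw [← AddMonoidAlgebra.sum_coeff_single F]
    simp only [Finsupp.sum]
    rw [pw_sum, map_sum, map_sum, pw_sum]
    apply Finset.sum_congr rfl
    intro v _
    change AddMonoidAlgebra.mapDomain _ (AddMonoidAlgebra.mapDomain _ _) = AddMonoidAlgebra.mapDomain _ (AddMonoidAlgebra.mapDomain _ _)
    simp only [AddMonoidAlgebra.mapDomain_single]
    congr 1
  exact this F

theorem SymF.of_altA {s : CharRing (m+1)} {v} (hs : s * MFPaper.altA m (rhoA m) = MFPaper.altA m v) : SymF s := by
  intro σ
  have h := anti_altA v σ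
  rw [← hs, map_mul, anti_altA, mul_smul_comm, ] at h
  apply mul_right_cancel₀ (altA_rho_ne (m := m))
  have h2 := congrArg (fun x => ((Equiv.Perm.sign σ : ℤˣ) : ℤ) • x) h
  simp only [smul_smul] at h2
  rw [← Units.val_mul, Int.units_mul_self] at h2
  simpa using h2

theorem SymF.add {F G : CharRing n} (hF : SymF F) (hG : SymF G) : SymF (F + G) := by
  intro σ; rw [map_add, hF, hG]

theorem SymF.smul {F : CharRing n} (z : ℤ) (hF : SymF F) : SymF (z • F) := by
  intro σ; rw [map_zsmul, hF]

theorem SymF.of_smul {F : CharRing n} {z : ℤ} (hz : z ≠ 0) (hF : SymF (z • F)) : SymF F := by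
  intro σ
  have := hF σ
  rw [map_zsmul] at this
  exact smul_right_injective _ hz this

end Supp

section SL
variable {m : ℕ}

theorem ext_diff {u v : Fin (m+1) → ℚ} (h : ∀ i : Fin m, u i.castSucc - u i.succ = v i.castSucc - v i.succ)
    (hs : ∑ i, u i = ∑ i, v i) : u = v := by
  have h1 : ∀ i : Fin (m+1), u i - v i = u 0 - v 0 := by
    intro i
    induction i using Fin.induction with
    | zero => rfl
    | succ i ih => rw [← ih]; linarith [h i]
  have h2 : ∑ i : Fin (m+1), (u i - v i) = 0 := by rw [Finset.sum_sub_distrib, hs, sub_self]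
  simp only [h1, Finset.sum_const, Finset.card_univ, Fintype.card_fin, nsmul_eq_mul] at h2
  have h3 : u 0 - v 0 = 0 := by
    rcases mul_eq_zero.1 h2 with h | h
    · exfalso; push_cast at h; linarith [(Nat.cast_nonneg m : (0:ℚ) ≤ m)]
    · exact h
  funext i
  linarith [h1 i]

theorem slWt_diff (d : Fin m → ℕ) (i : Fin m) : slWt m d i.castSucc - slWt m d i.succ = d i := by
  unfold slWt partLift
  have : (Finset.univ.filter (fun j : Fin m => ((i.castSucc : Fin (m+1)) : ℕ) ≤ (j : ℕ))) =
      insert i (Finset.univ.filter (fun j : Fin m => ((i.succ : Fin (m+1)) : ℕ) ≤ (j : ℕ))) := by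
    ext j; simp [Fin.ext_iff]; omega
  rw [this, Finset.sum_insert (by simp)]
  ring

theorem partLift_sum (d : Fin m → ℕ) : ∑ i, partLift m d i = ∑ j : Fin m, (((j : ℕ) : ℚ) + 1) * (d j : ℚ) := by
  unfold partLift
  simp only [Finset.sum_filter]
  rw [Finset.sum_comm]
  apply Finset.sum_congr rfl
  intro j _
  rw [← Finset.sum_filter, Finset.sum_const, nsmul_eq_mul]
  congr 1
  have : (Finset.univ.filter (fun i : Fin (m+1) => (i : ℕ) ≤ (j : ℕ))) = Finset.Iic j.castSucc := by
    ext i; simp [Fin.le_def]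
  rw [this, Fin.card_Iic]; simp

theorem slWt_sum (d : Fin m → ℕ) : ∑ i, slWt m d i = 0 := by
  unfold slWt
  rw [Finset.sum_sub_distrib, partLift_sum, Finset.sum_const, Finset.card_univ, Fintype.card_fin, nsmul_eq_mul]
  have : ((m + 1 : ℕ) : ℚ) ≠ 0 := by positivity
  push_cast at *
  field_simp
  ring

theorem slWt_inj {d d' : Fin m → ℕ} (h : slWt m d = slWt m d') : d = d' := by
  funext i
  have := slWt_diff d i
  rw [h, slWt_diff] at this
  exact_mod_cast this.symm

theorem rhoA_diff (i : Fin m) : rhoA m i.castSucc - rhoA m i.succ = 1 := by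
  unfold rhoA; simp

theorem slWt_anti (d : Fin m → ℕ) : StrictAnti (slWt m d + rhoA m) := by
  rw [Fin.strictAnti_iff_succ_lt]
  intro i
  have h1 := slWt_diff d i
  have h2 := rhoA_diff i
  simp only [Pi.add_apply]
  linarith [(Nat.cast_nonneg (d i) : (0:ℚ) ≤ d i)]

theorem anti_ext {F G : CharRing (m+1)} (hF : Anti F) (hG : Anti G)
    (h : ∀ u, StrictAnti u → F.coeff u = G.coeff u) : F = G := by
  apply AddMonoidAlgebra.coeff_injective
  ext u
  by_cases hu : Function.Injective u
  · set σ := Tuple.sort (fun i => - u i)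
    have hm := Tuple.monotone_sort (fun i => - u i)
    have hsa : StrictAnti (fun i => u (σ i)) := by
      have : StrictMono ((fun i => - u i) ∘ σ) := hm.strictMono_of_injective (by
        intro a b hab
        simp only [Function.comp, neg_inj] at hab
        exact σ.injective (hu hab))
      intro a b hab
      have := this hab
      simp only [Function.comp, neg_lt_neg_iff] at this
      exact this
    have := h _ hsa
    rw [hF.coeff, hG.coeff] at this
    exact mul_left_cancel₀ (by simp) this
  · obtain ⟨i, j, hij, hne⟩ : ∃ i j, u i = u j ∧ i ≠ j := by
      simpa [Function.Injective] using hu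
    rw [hF.coeff_eq_zero hne hij, hG.coeff_eq_zero hne hij]

theorem Anti.sum {n : ℕ} {ι : Type} (s : Finset ι) {F : ι → CharRing n} (h : ∀ i ∈ s, Anti (F i)) : Anti (∑ i ∈ s, F i) := by
  intro σ
  rw [map_sum, Finset.smul_sum]
  exact Finset.sum_congr rfl (fun i hi => h i hi σ)

theorem Anti.smul {n : ℕ} {F : CharRing n} (z : ℤ) (h : Anti F) : Anti (z • F) := by
  intro σ
  rw [map_zsmul, h, smul_comm]

theorem decomp_of (F : CharRing (m+1)) (t : ℚ) (N : ℕ) (hF : SymF F)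
    (hS : Sup (mono (fun _ => t) * (F * altA m (rhoA m))) (N + ∑ i, rhoN m i))
    (hN : (N : ℚ) = t * (m + 1))
    (hnn : ∀ l' : Fin (m+1) → ℕ, StrictAnti l' → ∑ i, l' i = N + ∑ i, rhoN m i →
      0 ≤ (mono (fun _ => t) * (F * altA m (rhoA m))).coeff (fun i => (l' i : ℚ))) :
    ∃ c : (Fin m → ℕ) →₀ ℕ, Decomp m F c ∧ ∀ μ, (c μ : ℤ) = (F * altA m (rhoA m)).coeff (slWt m μ + rhoA m) := by
  classical
  set G := F * altA m (rhoA m) with hG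
  have hGA : Anti G := hF.mul_anti (anti_altA _)
  have key : ∀ u : Fin (m+1) → ℚ, StrictAnti u → G.coeff u ≠ 0 → 0 ≤ G.coeff u ∧ ∃ μ, u = slWt m μ + rhoA m := by
    intro u hu h0
    rw [← mono_mul_coeff (fun _ => t)] at h0 ⊢
    obtain ⟨d, hd, hd'⟩ := hS _ h0
    have hu' : ∀ i, u i = d i - t := by
      intro i
      have := congrFun hd i
      simp only [Pi.add_apply] at this
      linarith
    have hda : StrictAnti d := by
      intro a b hab
      have := hu hab
      rw [hu', hu'] at this
      have : (d b : ℚ) < d a := by linarith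
      exact_mod_cast this
    constructor
    · rw [hd]; exact hnn d hda hd'
    · refine ⟨fun i => d i.castSucc - d i.succ - 1, ?_⟩
      apply ext_diff
      · intro i
        have h1 := slWt_diff (fun i => d i.castSucc - d i.succ - 1) i
        have h2 := rhoA_diff i
        have h3 : d i.succ < d i.castSucc := hda (Fin.castSucc_lt_succ)
        simp only [Pi.add_apply]
        rw [hu', hu']
        have h4 : ((d i.castSucc - d i.succ - 1 : ℕ) : ℚ) = d i.castSucc - d i.succ - 1 := by
          rw [Nat.cast_sub (by omega), Nat.cast_sub (by omega)]; simp
        rw [h4] at h1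
        linarith
      · simp only [Pi.add_apply, Finset.sum_add_distrib, slWt_sum, hu', Finset.sum_sub_distrib]
        rw [rhoA_eq]
        have : (∑ i, (d i : ℚ)) = N + ∑ i, (rhoN m i : ℚ) := by exact_mod_cast hd'
        rw [this]
        simp
        rw [hN]; ring
  let S : Finset (Fin m → ℕ) := G.coeff.support.image (fun u i => (⌊u i.castSucc - u i.succ - 1⌋).toNat)
  have hSm : ∀ μ, G.coeff (slWt m μ + rhoA m) ≠ 0 → μ ∈ S := by
    intro μ h
    apply Finset.mem_image.2
    refine ⟨_, Finsupp.mem_support_iff.2 h, ?_⟩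
    funext i
    have h1 := slWt_diff μ i
    have h2 := rhoA_diff i
    have : (slWt m μ + rhoA m) i.castSucc - (slWt m μ + rhoA m) i.succ - 1 = (μ i : ℚ) := by
      simp only [Pi.add_apply]; linarith
    rw [this]; simp
  let c : (Fin m → ℕ) →₀ ℕ := Finsupp.onFinset S (fun μ => (G.coeff (slWt m μ + rhoA m)).toNat) (by
    intro μ h
    apply hSm
    intro h0
    rw [h0] at h
    exact h rfl)
  have hc : ∀ μ, (c μ : ℤ) = G.coeff (slWt m μ + rhoA m) := by
    intro μ
    change ((G.coeff (slWt m μ + rhoA m)).toNat : ℤ) = _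
    apply Int.toNat_of_nonneg
    by_cases h : G.coeff (slWt m μ + rhoA m) = 0
    · rw [h]
    · exact (key _ (slWt_anti μ) h).1
  refine ⟨c, ?_, hc⟩
  unfold Decomp
  rw [← hG]
  simp only [Finsupp.sum]
  apply anti_ext hGA
  · apply Anti.sum
    intro μ _
    exact (anti_altA _).smul _
  · intro u hu
    rw [AddMonoidAlgebra.coeff_sum, Finsupp.finsetSum_apply]
    have : ∀ μ ∈ c.support, (((c μ : ℕ) : ℤ) • altA m (slWt m μ + rhoA m)).coeff u = if slWt m μ + rhoA m = u then G.coeff u else 0 := by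
      intro μ _
      rw [AddMonoidAlgebra.coeff_smul, Finsupp.smul_apply, altA_coeff _ _ (slWt_anti μ) hu, hc]
      split_ifs with h
      · rw [h]; simp
      · simp
    rw [Finset.sum_congr rfl this]
    by_cases h0 : G.coeff u = 0
    · rw [h0]; simp
    · obtain ⟨_, μ, hμ⟩ := key u hu h0
      rw [Finset.sum_eq_single μ]
      · rw [if_pos hμ.symm]
      · intro μ' _ hne
        rw [if_neg]
        intro h
        apply hne
        apply slWt_inj
        rw [hμ] at h
        exact add_right_cancel h
      · intro h
        exfalso
        rw [Finsupp.notMem_support_iff] at h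
        have := hc μ
        rw [h, ← hμ] at this
        exact h0 (by simpa using this.symm)

end SL


section Low
variable {m : ℕ}

/-- partial sums -/
def Dp (i : Fin (m+1)) : (Fin (m+1) → ℚ) →+ ℚ where
  toFun u := ∑ x, u x * (if x ≤ i then 1 else 0)
  map_zero' := by simp
  map_add' a b := by simp only [Pi.add_apply, add_mul, Finset.sum_add_distrib]

theorem Dp_apply (i : Fin (m+1)) (u) : Dp i u = ∑ x, u x * (if x ≤ i then 1 else 0) := rfl

theorem Dp_smul (i : Fin (m+1)) (k : ℚ) (u) : Dp i (k • u) = k * Dp i u := by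
  simp only [Dp_apply, Finset.mul_sum, Pi.smul_apply, smul_eq_mul, mul_assoc]

theorem Dp_last (u : Fin (m+1) → ℚ) : Dp (Fin.last m) u = ∑ x, u x := by
  simp [Dp_apply, Fin.le_last]

theorem Dp_single (i x : Fin (m+1)) (r : ℚ) : Dp i (Pi.single x r) = if x ≤ i then r else 0 := by
  rw [Dp_apply, Finset.sum_eq_single x]
  · simp
  · intro y _ hy
    simp [hy]
  · simp

theorem Dp_zero (u : Fin (m+1) → ℚ) : Dp 0 u = u 0 := by
  simp [Dp_apply]

theorem Dp_succ (i : Fin m) (u : Fin (m+1) → ℚ) : Dp i.succ u = Dp i.castSucc u + u i.succ := by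
  simp only [Dp_apply]
  have : u i.succ = ∑ x, u x * (if x = i.succ then 1 else 0) := by simp
  rw [this, ← Finset.sum_add_distrib]
  apply Finset.sum_congr rfl
  intro x _
  rw [← mul_add]
  congr 1
  have h1 : (x ≤ i.succ) ↔ (x ≤ i.castSucc ∨ x = i.succ) := by
    simp only [Fin.le_def, Fin.ext_iff, Fin.val_succ, Fin.val_castSucc]; omega
  by_cases h : x = i.succ
  · subst h
    simp [Fin.le_def]
  · simp [h1, h]

theorem Dp_ext {u v : Fin (m+1) → ℚ} (h : ∀ i, Dp i u = Dp i v) : u = v := by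
  funext i
  induction i using Fin.induction with
  | zero => simpa [Dp_zero] using h 0
  | succ i _ =>
    have h1 := h i.succ
    rw [Dp_succ, Dp_succ, h] at h1
    linarith

theorem Dp_perm_le (i : Fin (m+1)) {v : Fin (m+1) → ℚ} (hv : StrictAnti v) (σ : Equiv.Perm (Fin (m+1))) :
    Dp i (fun x => v (σ x)) ≤ Dp i v := by
  simp only [Dp_apply]
  apply Monovary.sum_comp_perm_mul_le_sum_mul
  intro a b hab
  apply hv.antitone
  by_contra hc
  push Not at hc
  dsimp only at hab
  by_cases h2 : b ≤ i
  · rw [if_pos (hc.le.trans h2), if_pos h2] at hab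
    exact lt_irrefl _ hab
  · rw [if_neg h2] at hab
    split_ifs at hab
    · linarith
    · exact lt_irrefl _ hab

theorem altA_supp {v u : Fin (m+1) → ℚ} (h : (altA m v).coeff u ≠ 0) : ∃ σ : Equiv.Perm (Fin (m+1)), u = fun i => v (σ i) := by
  rw [altA_coeff'] at h
  obtain ⟨σ, _, hσ⟩ := Finset.exists_ne_zero_of_sum_ne_zero h
  refine ⟨σ, ?_⟩
  by_contra hc
  apply hσ
  rw [if_neg (fun h' => hc h'.symm)]; simp

theorem altA_Dp_le (i : Fin (m+1)) {v u : Fin (m+1) → ℚ} (hv : StrictAnti v) (h : (altA m v).coeff u ≠ 0) : Dp i u ≤ Dp i v := by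
  obtain ⟨σ, rfl⟩ := altA_supp h
  exact Dp_perm_le i hv σ

/-- top-degree argument -/
theorem top_le (D : (Fin (m+1) → ℚ) →+ ℚ) (F G : CharRing (m+1)) (B C : ℚ)
    (hG1 : ∃ w, G.coeff w ≠ 0 ∧ D w = C) (hG2 : ∀ w, G.coeff w ≠ 0 → D w ≤ C)
    (hFG : ∀ u, (F * G).coeff u ≠ 0 → D u ≤ B + C) : ∀ v, F.coeff v ≠ 0 → D v ≤ B := by
  classical
  intro v hv
  obtain ⟨v0, hv0, hmax⟩ := Finset.exists_max_image F.coeff.support D ⟨v, Finsupp.mem_support_iff.2 hv⟩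
  rw [Finsupp.mem_support_iff] at hv0
  refine (hmax v (Finsupp.mem_support_iff.2 hv)).trans ?_
  obtain ⟨w0, hw0, hw0C⟩ := hG1
  let FT : CharRing (m+1) := ⟨F.coeff.filter (fun u => D u = D v0)⟩
  let GT : CharRing (m+1) := ⟨G.coeff.filter (fun u => D u = C)⟩
  have hFT : FT ≠ 0 := by
    intro h
    have : FT.coeff v0 = 0 := by rw [h]; rfl
    change F.coeff.filter (fun u => D u = D v0) v0 = 0 at this
    rw [Finsupp.filter_apply_pos (fun u => D u = D v0) _ rfl] at this
    exact hv0 this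
  have hGT : GT ≠ 0 := by
    intro h
    have : GT.coeff w0 = 0 := by rw [h]; rfl
    change G.coeff.filter (fun u => D u = C) w0 = 0 at this
    rw [Finsupp.filter_apply_pos (fun u => D u = C) _ hw0C] at this
    exact hw0 this
  have hFTs : ∀ u, FT.coeff u ≠ 0 → D u = D v0 := by
    intro u hu
    by_contra h
    exact hu (Finsupp.filter_apply_neg (fun u => D u = D v0) _ h)
  have hGTs : ∀ u, GT.coeff u ≠ 0 → D u = C := by
    intro u hu
    by_contra h
    exact hu (Finsupp.filter_apply_neg (fun u => D u = C) _ h)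
  have hFd : ∀ u, (F - FT).coeff u ≠ 0 → D u < D v0 := by
    intro u hu
    rw [AddMonoidAlgebra.coeff_sub, Finsupp.sub_apply] at hu
    by_cases h : D u = D v0
    · exfalso; apply hu
      have : FT.coeff u = F.coeff u := Finsupp.filter_apply_pos (fun u => D u = D v0) _ h
      rw [this, sub_self]
    · have : FT.coeff u = 0 := Finsupp.filter_apply_neg (fun u => D u = D v0) _ h
      rw [this, sub_zero] at hu
      exact lt_of_le_of_ne (hmax u (Finsupp.mem_support_iff.2 hu)) h
  have hGd : ∀ u, (G - GT).coeff u ≠ 0 → D u < C := by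
    intro u hu
    rw [AddMonoidAlgebra.coeff_sub, Finsupp.sub_apply] at hu
    by_cases h : D u = C
    · exfalso; apply hu
      have : GT.coeff u = G.coeff u := Finsupp.filter_apply_pos (fun u => D u = C) _ h
      rw [this, sub_self]
    · have : GT.coeff u = 0 := Finsupp.filter_apply_neg (fun u => D u = C) _ h
      rw [this, sub_zero] at hu
      exact lt_of_le_of_ne (hG2 u hu) h
  have hne : FT * GT ≠ 0 := mul_ne_zero hFT hGT
  obtain ⟨u, hu⟩ : ∃ u, (FT * GT).coeff u ≠ 0 := by
    by_contra h
    push Not at h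
    apply hne
    apply AddMonoidAlgebra.coeff_injective
    ext u; rw [h u]; rfl
  have hDu : D u = D v0 + C := by
    obtain ⟨a, b, rfl, ha, hb⟩ := supp_mul hu
    rw [map_add, hFTs a ha, hGTs b hb]
  have e1 : F * G = FT * GT + ((F - FT) * G + FT * (G - GT)) := by ring
  have e2 : ((F - FT) * G).coeff u = 0 := by
    by_contra h
    obtain ⟨a, b, rfl, ha, hb⟩ := supp_mul h
    have := hFd a ha
    have := hG2 b hb
    rw [map_add] at hDu
    linarith
  have e3 : (FT * (G - GT)).coeff u = 0 := by
    by_contra h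
    obtain ⟨a, b, rfl, ha, hb⟩ := supp_mul h
    have := hFTs a ha
    have := hGd b hb
    rw [map_add] at hDu
    linarith
  have h4 : (F * G).coeff u ≠ 0 := by
    rw [e1, AddMonoidAlgebra.coeff_add, AddMonoidAlgebra.coeff_add, Finsupp.add_apply, Finsupp.add_apply, e2, e3]
    simpa using hu
  have := hFG u h4
  linarith

def Low (b : Fin (m+1) → ℚ) (F : CharRing (m+1)) : Prop :=
  ∀ u, F.coeff u ≠ 0 → ∃ c : Fin (m+1) → ℕ, c (Fin.last m) = 0 ∧ ∀ i, Dp i u + c i = Dp i b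

theorem Low.mul {b b' : Fin (m+1) → ℚ} {F G : CharRing (m+1)} (hF : Low b F) (hG : Low b' G) : Low (b + b') (F * G) := by
  intro u hu
  obtain ⟨x, y, rfl, hx, hy⟩ := supp_mul hu
  obtain ⟨c, h0, h1⟩ := hF x hx
  obtain ⟨c', h0', h1'⟩ := hG y hy
  refine ⟨c + c', by simp [h0, h0'], ?_⟩
  intro i
  rw [map_add, map_add, ← h1, ← h1']
  push_cast [Pi.add_apply]
  ring

theorem Low.pw {b : Fin (m+1) → ℚ} {F : CharRing (m+1)} (k : ℕ) (hk : k ≠ 0) (hF : Low b F) : Low ((k : ℚ) • b) (pw k F) := by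
  intro u hu
  obtain ⟨v, rfl, hv⟩ := supp_pw hk hu
  obtain ⟨c, h0, h1⟩ := hF v hv
  refine ⟨k • c, by simp [h0], ?_⟩
  intro i
  rw [Dp_smul, Dp_smul, ← h1]
  simp
  ring

/-- nat-supported with dominated partial sums is low -/
theorem Low.of_sup {F : CharRing (m+1)} {N : ℕ} (b : Fin (m+1) → ℕ) (hb : ∑ i, b i = N) (hS : Sup F N)
    (hD : ∀ i u, F.coeff u ≠ 0 → Dp i u ≤ Dp i (fun x => (b x : ℚ))) : Low (fun x => (b x : ℚ)) F := by
  intro u hu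
  obtain ⟨d, rfl, hd⟩ := hS u hu
  have hn : ∀ (d : Fin (m+1) → ℕ) i, Dp i (fun x => (d x : ℚ)) = ((∑ x, d x * (if x ≤ i then 1 else 0) : ℕ) : ℚ) := by
    intro d i; rw [Dp_apply]; push_cast; rfl
  have h1 : ∀ i, ∑ x, d x * (if x ≤ i then 1 else 0) ≤ ∑ x, b x * (if x ≤ i then 1 else 0) := by
    intro i
    have := hD i _ hu
    rw [hn, hn] at this
    exact_mod_cast this
  refine ⟨fun i => ∑ x, b x * (if x ≤ i then 1 else 0) - ∑ x, d x * (if x ≤ i then 1 else 0), ?_, ?_⟩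
  · simp [Fin.le_last, hd, hb]
  · intro i
    rw [hn, hn]
    have := h1 i
    rw [← Nat.cast_add]
    congr 1
    dsimp only
    omega

theorem Low.altA (b : Fin (m+1) → ℕ) (hb : StrictAnti b) : Low (fun x => (b x : ℚ)) (altA m (fun x => (b x : ℚ))) :=
  Low.of_sup b rfl (Sup.altA b) (fun i _ hu => altA_Dp_le i (nat_anti hb) hu)

theorem Low.char (k : ℕ) (l lam : Fin (m+1) → ℕ) (hlam : ∀ i, l i = lam i + rhoN m i) (hL : StrictAnti l)
    (hk : ∑ i, lam i = k) (s : CharRing (m+1))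
    (hs : s * MFPaper.altA m (rhoA m) = MFPaper.altA m (fun i => (l i : ℚ))) : Low (fun x => (lam x : ℚ)) s := by
  have hl : ∑ i, l i = k + ∑ i, rhoN m i := by
    rw [← hk, ← Finset.sum_add_distrib]; exact Finset.sum_congr rfl (fun i _ => hlam i)
  refine Low.of_sup lam hk (Sup.char k l hl s hs) ?_
  intro i
  refine top_le (Dp i) s (MFPaper.altA m (rhoA m)) _ (Dp i (rhoA m)) ⟨rhoA m, ?_, rfl⟩ ?_ ?_
  · rw [altA_coeff _ _ rhoA_anti rhoA_anti]; simp
  · intro w hw; exact altA_Dp_le i rhoA_anti hw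
  · intro u hu
    rw [hs] at hu
    have := altA_Dp_le i (nat_anti hL) hu
    rw [← map_add]
    convert this using 2
    funext x
    rw [rhoA_eq]; simp [hlam]

end Low


section Trunc
variable {m : ℕ}

def rt (j : Fin m) : Fin (m+1) → ℚ := Pi.single j.castSucc 1 - Pi.single j.succ 1

theorem Dp_rt (i : Fin (m+1)) (j : Fin m) : Dp i (rt j) = if i = j.castSucc then 1 else 0 := by
  unfold rt
  rw [map_sub, Dp_single, Dp_single]
  simp only [Fin.le_def, Fin.ext_iff, Fin.val_succ, Fin.val_castSucc]
  split_ifs <;> first | omega | norm_num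

def Tr (j j' : Fin m) (b : Fin (m+1) → ℚ) (F : CharRing (m+1)) (p q : ℕ) : ℤ :=
  F.coeff (b - (p : ℚ) • rt j - (q : ℚ) • rt j')

theorem coeff_mul_sum (F G : CharRing (m+1)) (u : Fin (m+1) → ℚ) :
    (F * G).coeff u = ∑ a ∈ F.coeff.support, F.coeff a * G.coeff (u - a) := by
  conv_lhs => rw [← AddMonoidAlgebra.sum_coeff_single F]
  simp only [Finsupp.sum]
  rw [Finset.sum_mul, AddMonoidAlgebra.coeff_sum, Finsupp.finsetSum_apply]
  apply Finset.sum_congr rfl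
  intro a _
  rw [AddMonoidAlgebra.coeff_single_mul_apply, neg_add_eq_sub]

theorem Dp_pt (i : Fin (m+1)) (j j' : Fin m) (b : Fin (m+1) → ℚ) (p q : ℚ) :
    Dp i (b - p • rt j - q • rt j') = Dp i b - p * (if i = j.castSucc then 1 else 0) - q * (if i = j'.castSucc then 1 else 0) := by
  rw [map_sub, map_sub, Dp_smul, Dp_smul, Dp_rt, Dp_rt]

theorem pt_inj {j j' : Fin m} (hj : j ≠ j') (b : Fin (m+1) → ℚ) {p q p' q' : ℚ}
    (h : b - p • rt j - q • rt j' = b - p' • rt j - q' • rt j') : p = p' ∧ q = q' := by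
  have h1 := congrArg (Dp j.castSucc) h
  have h2 := congrArg (Dp j'.castSucc) h
  rw [Dp_pt, Dp_pt] at h1 h2
  simp [hj, hj.symm] at h1 h2
  exact ⟨h1, h2⟩

theorem Tr_mul {j j' : Fin m} (hj : j ≠ j') {b b' : Fin (m+1) → ℚ} {F G : CharRing (m+1)} (hF : Low b F) (hG : Low b' G) (p q : ℕ) :
    Tr j j' (b + b') (F * G) p q = ∑ z ∈ Finset.range (p+1) ×ˢ Finset.range (q+1),
      Tr j j' b F z.1 z.2 * Tr j j' b' G (p - z.1) (q - z.2) := by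
  unfold Tr
  rw [coeff_mul_sum]
  symm
  have hsub : ∀ z : ℕ × ℕ, z ∈ Finset.range (p+1) ×ˢ Finset.range (q+1) →
      (b + b' - (p : ℚ) • rt j - (q : ℚ) • rt j') - (b - (z.1 : ℚ) • rt j - (z.2 : ℚ) • rt j')
       = b' - ((p - z.1 : ℕ) : ℚ) • rt j - ((q - z.2 : ℕ) : ℚ) • rt j' := by
    intro z hz
    simp only [Finset.mem_product, Finset.mem_range] at hz
    rw [Nat.cast_sub (by omega), Nat.cast_sub (by omega)]
    module
  refine Finset.sum_bij_ne_zero (fun z _ _ => b - (z.1 : ℚ) • rt j - (z.2 : ℚ) • rt j') ?_ ?_ ?_ ?_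
  · intro z hz h0
    exact Finsupp.mem_support_iff.2 (left_ne_zero_of_mul h0)
  · intro z _ _ z' _ _ h
    obtain ⟨h1, h2⟩ := pt_inj hj b h
    exact Prod.ext (by exact_mod_cast h1) (by exact_mod_cast h2)
  · intro a ha h0
    obtain ⟨c, hc0, hc⟩ := hF a (left_ne_zero_of_mul h0)
    obtain ⟨c', hc0', hc'⟩ := hG _ (right_ne_zero_of_mul h0)
    have hsum : ∀ i, (c i : ℚ) + c' i = p * (if i = j.castSucc then 1 else 0) + q * (if i = j'.castSucc then 1 else 0) := by
      intro i
      have h1 := hc i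
      have h2 := hc' i
      rw [map_sub, Dp_pt, map_add] at h2
      linarith
    have hsumN : ∀ i, c i + c' i = p * (if i = j.castSucc then 1 else 0) + q * (if i = j'.castSucc then 1 else 0) := by
      intro i; exact_mod_cast hsum i
    have hne : j.castSucc ≠ j'.castSucc := fun h => hj (Fin.castSucc_injective _ h)
    have hz : (c j.castSucc, c j'.castSucc) ∈ Finset.range (p+1) ×ˢ Finset.range (q+1) := by
      have h1 := hsumN j.castSucc
      have h2 := hsumN j'.castSucc
      simp [hne, hne.symm] at h1 h2
      simp; omega
    have hae : a = b - (c j.castSucc : ℚ) • rt j - (c j'.castSucc : ℚ) • rt j' := by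
      apply Dp_ext
      intro i
      rw [Dp_pt, ← hc i]
      by_cases h1 : i = j.castSucc
      · subst h1; simp [hne]
      · by_cases h2 : i = j'.castSucc
        · subst h2; simp [hne.symm]
        · have := hsumN i
          simp [h1, h2] at this
          simp [h1, h2, this.1]
    refine ⟨_, hz, ?_, hae.symm⟩
    rw [← hsub _ hz]
    dsimp only
    rw [← hae]
    exact h0
  · intro z hz _
    rw [hsub z hz]

theorem Tr_pw_zero {j j' : Fin m} (hj : j ≠ j') {b : Fin (m+1) → ℚ} {F : CharRing (m+1)} (hF : Low b F) (k : ℕ) (hk : k ≠ 0)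
    (p q : ℕ) (h : ¬ (k ∣ p ∧ k ∣ q)) : Tr j j' ((k : ℚ) • b) (pw k F) p q = 0 := by
  by_contra h0
  unfold Tr at h0
  obtain ⟨v, hv, hv'⟩ := supp_pw hk h0
  obtain ⟨c, _, hc⟩ := hF v hv'
  apply h
  have hne : j.castSucc ≠ j'.castSucc := fun h => hj (Fin.castSucc_injective _ h)
  constructor
  · refine ⟨c j.castSucc, ?_⟩
    have h1 := congrArg (Dp j.castSucc) hv
    rw [Dp_pt, Dp_smul, Dp_smul, ← hc] at h1
    simp [hne] at h1
    have : (p : ℚ) = k * c j.castSucc := by linarith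
    exact_mod_cast this
  · refine ⟨c j'.castSucc, ?_⟩
    have h1 := congrArg (Dp j'.castSucc) hv
    rw [Dp_pt, Dp_smul, Dp_smul, ← hc] at h1
    simp [hne.symm] at h1
    have : (q : ℚ) = k * c j'.castSucc := by linarith
    exact_mod_cast this

theorem Tr_pw_00 {j j' : Fin m} {b : Fin (m+1) → ℚ} {F : CharRing (m+1)} (k : ℕ) (hk : k ≠ 0) :
    Tr j j' ((k : ℚ) • b) (pw k F) 0 0 = Tr j j' b F 0 0 := by
  unfold Tr
  simp only [Nat.cast_zero, zero_smul, sub_zero]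
  rw [pw_coeff k hk]

/-- coefficient of an alternating sum away from the orbit, by norms -/
theorem altA_norm {v w : Fin (m+1) → ℚ} (h : ∑ i, (2 * v i * w i + w i ^ 2) ≠ 0) : (altA m v).coeff (v + w) = 0 := by
  by_contra h0
  obtain ⟨σ, hσ⟩ := altA_supp h0
  apply h
  have h1 : ∑ i, (v i + w i) ^ 2 = ∑ i, v i ^ 2 := by
    rw [← Equiv.sum_comp σ (fun i => v i ^ 2)]
    apply Finset.sum_congr rfl
    intro i _
    have := congrFun hσ i
    simp only [Pi.add_apply] at this
    rw [this]
  have h2 : ∑ i, (2 * v i * w i + w i ^ 2) = ∑ i, (v i + w i)^2 - ∑ i, v i ^ 2 := by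
    rw [← Finset.sum_sub_distrib]
    exact Finset.sum_congr rfl (fun i _ => by ring)
  rw [h2, h1, sub_self]

theorem sum_mul_rt (v : Fin (m+1) → ℚ) (j : Fin m) : ∑ i, v i * rt j i = v j.castSucc - v j.succ := by
  unfold rt
  simp [mul_sub, Finset.sum_sub_distrib, Pi.single_apply]

theorem norm_calc {j j' : Fin m} (hj : (j' : ℕ) = j + 1) (v : Fin (m+1) → ℚ) (p q : ℚ) :
    ∑ i, (2 * v i * (-(p • rt j) - q • rt j') i + (-(p • rt j) - q • rt j') i ^ 2) =
    -2 * p * (v j.castSucc - v j.succ) - 2 * q * (v j'.castSucc - v j'.succ) + 2 * p^2 + 2 * q^2 - 2*p*q := by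
  have e : ∀ i, (2 * v i * (-(p • rt j) - q • rt j') i + (-(p • rt j) - q • rt j') i ^ 2) =
    (-2*p) * (v i * rt j i) + (-2*q) * (v i * rt j' i) + p^2 * (rt j i * rt j i) + 2*p*q*(rt j i * rt j' i) + q^2 * (rt j' i * rt j' i) := by
    intro i; simp; ring
  simp only [e, Finset.sum_add_distrib, ← Finset.mul_sum, sum_mul_rt]
  have h1 : j'.castSucc = j.succ := by ext; simp [hj]
  have a1 : rt j j.castSucc = 1 := by simp [rt, Fin.ext_iff]
  have a2 : rt j j.succ = -1 := by simp [rt, Fin.ext_iff]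
  have a3 : rt j' j'.castSucc = 1 := by simp [rt, Fin.ext_iff]
  have a4 : rt j' j'.succ = -1 := by simp [rt, Fin.ext_iff]
  have a5 : rt j j'.castSucc = -1 := by rw [h1, a2]
  have a6 : rt j j'.succ = 0 := by simp [rt, Fin.ext_iff, Pi.single_apply, hj]; omega
  rw [a1, a2, a3, a4, a5, a6]
  ring

theorem Tr_L {j j' : Fin m} (hj : (j' : ℕ) = j + 1) (v : Fin (m+1) → ℚ) (hv : StrictAnti v)
    (h1 : 2 ≤ v j.castSucc - v j.succ) (h2 : 3 ≤ v j'.castSucc - v j'.succ) (p q : ℕ) (hp : p ≤ 1) (hq : q ≤ 2) :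
    Tr j j' v (altA m v) p q = if p = 0 ∧ q = 0 then 1 else 0 := by
  split_ifs with h
  · unfold Tr
    rw [h.1, h.2]
    simp only [Nat.cast_zero, zero_smul, sub_zero]
    rw [altA_coeff _ _ hv hv, if_pos rfl]
  · unfold Tr
    have : v - (p : ℚ) • rt j - (q : ℚ) • rt j' = v + (-((p : ℚ) • rt j) - (q : ℚ) • rt j') := by abel
    rw [this]
    apply altA_norm
    rw [norm_calc hj]
    interval_cases p <;> interval_cases q <;> simp at h ⊢ <;> apply ne_of_lt <;> linarith

end Trunc


section Coef
variable {m : ℕ}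

theorem Tr_rho {j j' : Fin m} (hj : (j' : ℕ) = j + 1) :
    Tr j j' (rhoA m) (altA m (rhoA m)) 0 0 = 1 ∧ Tr j j' (rhoA m) (altA m (rhoA m)) 1 0 = -1 ∧
    Tr j j' (rhoA m) (altA m (rhoA m)) 0 1 = -1 ∧ Tr j j' (rhoA m) (altA m (rhoA m)) 1 1 = 0 ∧
    Tr j j' (rhoA m) (altA m (rhoA m)) 0 2 = 0 ∧ Tr j j' (rhoA m) (altA m (rhoA m)) 1 2 = 1 := by
  obtain ⟨a, ha⟩ : ∃ a, a = j.castSucc := ⟨_, rfl⟩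
  obtain ⟨b, hb⟩ : ∃ b, b = j.succ := ⟨_, rfl⟩
  obtain ⟨c, hc⟩ : ∃ c, c = j'.succ := ⟨_, rfl⟩
  have hb' : b = j'.castSucc := by rw [hb]; ext; simp [hj]
  have hab : a ≠ b := by rw [ha, hb]; simp [Fin.ext_iff]
  have hbc : b ≠ c := by rw [hb', hc]; simp [Fin.ext_iff]
  have hac : a ≠ c := by rw [ha, hc]; simp [Fin.ext_iff]; omega
  have rb : rhoA m b = rhoA m a - 1 := by rw [ha, hb]; linarith [rhoA_diff j]
  have rc : rhoA m c = rhoA m a - 2 := by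
    have := rhoA_diff j'
    rw [← hb', ← hc] at this; linarith
  have one : (altA m (rhoA m)).coeff (rhoA m) = 1 := by
    rw [altA_coeff _ _ rhoA_anti rhoA_anti, if_pos rfl]
  have val : ∀ (p q : ℚ) i, (rhoA m - p • rt j - q • rt j') i =
      rhoA m i - p * ((if i = a then 1 else 0) - (if i = b then 1 else 0)) - q * ((if i = b then 1 else 0) - (if i = c then 1 else 0)) := by
    intro p q i
    simp only [Pi.sub_apply, Pi.smul_apply, smul_eq_mul, rt, Pi.single_apply, ← ha, ← hb, ← hb', ← hc]
  have A := anti_altA (m := m) (rhoA m)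
  have perm : ∀ (p q : ℚ) (σ : Equiv.Perm (Fin (m+1))), (∀ i, (rhoA m - p • rt j - q • rt j') i = rhoA m (σ i)) →
      (altA m (rhoA m)).coeff (rhoA m - p • rt j - q • rt j') = ((Equiv.Perm.sign σ : ℤˣ) : ℤ) := by
    intro p q σ h
    have h1 := A.coeff σ (rhoA m)
    rw [one, mul_one] at h1
    rw [← h1]
    congr 1
    funext i
    exact h i
  unfold Tr
  refine ⟨?_, ?_, ?_, ?_, ?_, ?_⟩
  · simpa using one
  · rw [perm _ _ (Equiv.swap a b)]
    · simp [Equiv.Perm.sign_swap hab]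
    · intro i
      rw [val, Equiv.swap_apply_def]
      split_ifs <;> simp_all
  · rw [perm _ _ (Equiv.swap b c)]
    · simp [Equiv.Perm.sign_swap hbc]
    · intro i
      rw [val, Equiv.swap_apply_def]
      split_ifs <;> simp_all <;> linarith
  · apply A.coeff_eq_zero hab
    rw [val, val]
    simp [hab, hab.symm, hac, hbc, rb]
  · apply A.coeff_eq_zero hac
    rw [val, val]
    simp [hab, hac, hac.symm, hbc.symm, rc]
  · rw [perm _ _ (Equiv.swap a b * Equiv.swap b c)]
    · simp [Equiv.Perm.sign_swap hab, Equiv.Perm.sign_swap hbc]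
    · intro i
      rw [val, Equiv.Perm.mul_apply]
      by_cases h1 : i = a
      · subst h1
        rw [Equiv.swap_apply_of_ne_of_ne hab hac, Equiv.swap_apply_left]
        simp [hab, hac, rb]
      · by_cases h2 : i = b
        · subst h2
          rw [Equiv.swap_apply_left, Equiv.swap_apply_of_ne_of_ne hac.symm hbc.symm]
          simp only [hab.symm, hbc, rb, rc, if_true, if_false]; ring
        · by_cases h3 : i = c
          · subst h3
            rw [Equiv.swap_apply_right, Equiv.swap_apply_right]
            simp [hac.symm, hbc.symm, rc]
          · rw [Equiv.swap_apply_of_ne_of_ne h2 h3, Equiv.swap_apply_of_ne_of_ne h1 h2]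
            simp [h1, h2, h3]

theorem coef_main {j j' : Fin m} (hj : (j' : ℕ) = j + 1) (l lam : Fin (m+1) → ℕ)
    (hlam : ∀ i, l i = lam i + rhoN m i) (hL : StrictAnti l)
    (h1 : l j.succ + 2 ≤ l j.castSucc) (h2 : l j'.succ + 3 ≤ l j'.castSucc)
    (s : CharRing (m+1)) (hs : s * altA m (rhoA m) = altA m (fun i => (l i : ℚ)))
    (u : Fin (m+1) → ℚ) (hu : u = (fun i => 3 * (lam i : ℚ)) + rhoA m - rt j - (2:ℚ) • rt j') :
    (s * s * s * altA m (rhoA m)).coeff u = 10 ∧ (pw 2 s * s * altA m (rhoA m)).coeff u = 0 ∧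
    (pw 3 s * altA m (rhoA m)).coeff u = 1 := by
  have hjj : j ≠ j' := by intro h; rw [h] at hj; omega
  set v : Fin (m+1) → ℚ := fun i => (l i : ℚ) with hv
  set b : Fin (m+1) → ℚ := fun i => (lam i : ℚ) with hb
  have hvb : v = b + rhoA m := by
    funext i; rw [rhoA_eq]; simp [hv, hb, hlam]
  have Ls : Low b s := Low.char _ l lam hlam hL rfl s hs
  have Lr : Low (rhoA m) (altA m (rhoA m)) := by
    have := Low.altA (rhoN m) (m := m) (by
      intro x y hxy
      have := rhoA_anti (m := m) hxy
      rw [rhoA_eq] at this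
      exact Nat.cast_lt.1 this)
    rwa [← rhoA_eq] at this
  have Lv : Low v (altA m v) := Low.altA l hL
  have TL := fun p q hp hq => Tr_L hj v (nat_anti hL)
    (by have : ((l j.succ + 2 : ℕ) : ℚ) ≤ l j.castSucc := by exact_mod_cast h1
        push_cast at this; simp only [hv]; linarith)
    (by have : ((l j'.succ + 3 : ℕ) : ℚ) ≤ l j'.castSucc := by exact_mod_cast h2
        push_cast at this; simp only [hv]; linarith) p q hp hq
  obtain ⟨r00, r10, r01, r11, r02, r12⟩ := Tr_rho hj
  have C := fun p q => Tr_mul hjj Ls Lr p q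
  rw [hs, ← hvb] at C
  have c00 := C 0 0
  have c10 := C 1 0
  have c01 := C 0 1
  have c02 := C 0 2
  have c11 := C 1 1
  have c12 := C 1 2
  rw [TL _ _ (by norm_num) (by norm_num)] at c00 c10 c01 c02 c11 c12
  simp [Finset.sum_product, Finset.sum_range_succ, r00, r10, r01, r11, r02, r12] at c00 c10 c01 c02 c11 c12
  have f00 : Tr j j' b s 0 0 = 1 := by linarith
  have f10 : Tr j j' b s 1 0 = 1 := by linarith
  have f01 : Tr j j' b s 0 1 = 1 := by linarith
  have f02 : Tr j j' b s 0 2 = 1 := by linarith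
  have f11 : Tr j j' b s 1 1 = 2 := by linarith
  have f12 : Tr j j' b s 1 2 = 2 := by linarith
  have V00 := TL 0 0 (by norm_num) (by norm_num)
  have V10 := TL 1 0 (by norm_num) (by norm_num)
  have V01 := TL 0 1 (by norm_num) (by norm_num)
  have V02 := TL 0 2 (by norm_num) (by norm_num)
  have V11 := TL 1 1 (by norm_num) (by norm_num)
  have V12 := TL 1 2 (by norm_num) (by norm_num)
  simp at V00 V10 V01 V02 V11 V12
  have hu' : ∀ w, w = (fun i => 3 * (lam i : ℚ)) + rhoA m → u = w - ((1:ℕ):ℚ) • rt j - ((2:ℕ):ℚ) • rt j' := by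
    intro w hw; rw [hw, hu]; simp
  refine ⟨?_, ?_, ?_⟩
  · rw [mul_assoc (s * s), hs, hu' (b + b + v) (by rw [hvb]; funext i; simp [hb]; ring)]
    change Tr j j' (b + b + v) (s * s * altA m v) 1 2 = 10
    rw [Tr_mul hjj (Ls.mul Ls) Lv]
    simp [Finset.sum_product, Finset.sum_range_succ, V00, V10, V01, V02, V11, V12]
    rw [Tr_mul hjj Ls Ls]
    simp [Finset.sum_product, Finset.sum_range_succ, f00, f10, f01, f02, f11, f12]
  · rw [mul_assoc, hs, hu' (((2:ℕ):ℚ) • b + v) (by rw [hvb]; funext i; simp [hb]; ring)]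
    change Tr j j' (((2:ℕ):ℚ) • b + v) (pw 2 s * altA m v) 1 2 = 0
    rw [Tr_mul hjj (Ls.pw 2 (by norm_num)) Lv]
    simp only [Finset.sum_product, Finset.sum_range_succ, Finset.range_zero, Finset.sum_empty, zero_add, Nat.sub_zero, Nat.sub_self,
      V00, V10, V01, V02, V11, V12, mul_zero, add_zero, mul_one, Nat.reduceSub, Nat.reduceAdd]
    exact Tr_pw_zero hjj Ls 2 (by norm_num) 1 2 (by decide)
  · rw [hu' (((3:ℕ):ℚ) • b + rhoA m) (by funext i; simp [hb])]
    change Tr j j' (((3:ℕ):ℚ) • b + rhoA m) (pw 3 s * altA m (rhoA m)) 1 2 = 1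
    rw [Tr_mul hjj (Ls.pw 3 (by norm_num)) Lr]
    have Z := fun p q h => Tr_pw_zero hjj Ls 3 (by norm_num) p q h
    have Z0 : Tr j j' (((3:ℕ):ℚ) • b) (pw 3 s) 0 0 = 1 := by rw [Tr_pw_00 3 (by norm_num), f00]
    have Z10 := Z 1 0 (by decide)
    have Z01 := Z 0 1 (by decide)
    have Z02 := Z 0 2 (by decide)
    have Z11 := Z 1 1 (by decide)
    have Z12 := Z 1 2 (by decide)
    simp only [Finset.sum_product, Finset.sum_range_succ, Finset.range_zero, Finset.sum_empty, zero_add, Nat.sub_zero, Nat.sub_self,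
      Z0, Z10, Z01, Z02, Z11, Z12, zero_mul, add_zero, one_mul, Nat.reduceSub, Nat.reduceAdd, r12]

end Coef


section Final
variable {m : ℕ}

def lamN (ν : Fin m → ℕ) (i : Fin (m+1)) : ℕ :=
  ∑ j ∈ Finset.univ.filter (fun j : Fin m => (i : ℕ) ≤ (j : ℕ)), ν j

theorem partLift_eq (ν : Fin m → ℕ) (i : Fin (m+1)) : partLift m ν i = lamN ν i := by
  unfold partLift lamN; push_cast; rfl

theorem lamN_diff (ν : Fin m → ℕ) (i : Fin m) : lamN ν i.castSucc = lamN ν i.succ + ν i := by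
  have := slWt_diff ν i
  unfold slWt at this
  rw [partLift_eq, partLift_eq] at this
  have : (lamN ν i.castSucc : ℚ) = lamN ν i.succ + ν i := by linarith
  exact_mod_cast this

theorem rhoN_diff (i : Fin m) : rhoN m i.castSucc = rhoN m i.succ + 1 := by
  unfold rhoN; simp; omega

theorem altA_shift (v : Fin (m+1) → ℚ) (t : ℚ) : altA m (fun i => t + v i) = mono (fun _ => t) * altA m v := by
  unfold altA
  rw [Finset.mul_sum]
  apply Finset.sum_congr rfl
  intro σ _
  rw [mul_smul_comm, ← mono_add]; rfl

structure Setup (ν : Fin m → ℕ) (f : CharRing (m+1)) (t : ℚ) (s : CharRing (m+1)) : Prop where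
  ht : t = (∑ j : Fin m, (((j : ℕ) : ℚ) + 1) * (ν j : ℚ)) / (m + 1)
  hs : s = mono (fun _ => t) * f
  hf : IsCharA m ν f

variable {ν : Fin m → ℕ} {f s : CharRing (m+1)} {t : ℚ}

theorem Setup.tk (S : Setup ν f t s) : ((∑ i, lamN ν i : ℕ) : ℚ) = t * (m + 1) := by
  push_cast
  simp only [← partLift_eq]
  rw [partLift_sum, S.ht]
  have : (m + 1 : ℚ) ≠ 0 := by positivity
  field_simp

theorem Setup.slWt (S : Setup ν f t s) (i) : MFPaper.slWt m ν i = lamN ν i - t := by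
  unfold MFPaper.slWt; rw [partLift_eq, S.ht]

theorem Setup.char (S : Setup ν f t s) : s * altA m (rhoA m) = altA m (fun i => ((lamN ν i + rhoN m i : ℕ) : ℚ)) := by
  have h := S.hf
  unfold IsCharA at h
  rw [S.hs, mul_assoc, mul_comm f, h, ← altA_shift]
  congr 1
  funext i
  rw [rhoA_eq, Pi.add_apply, S.slWt]
  push_cast; ring

theorem l_anti (ν : Fin m → ℕ) : StrictAnti (fun i => lamN ν i + rhoN m i) := by
  rw [Fin.strictAnti_iff_succ_lt]
  intro i
  rw [lamN_diff, rhoN_diff]; omega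

theorem Setup.e1 (S : Setup ν f t s) : mono (fun _ => 3 * t) * (f * f * f) = s * s * s := by
  have : (fun _ => 3 * t : Fin (m+1) → ℚ) = (fun _ => t) + (fun _ => t) + (fun _ => t) := by
    funext i; simp; ring
  rw [S.hs, this, mono_add, mono_add]; ring

theorem Setup.e2 (S : Setup ν f t s) : mono (fun _ => 3 * t) * (f * pw 2 f) = pw 2 s * s := by
  have : (fun _ => 3 * t : Fin (m+1) → ℚ) = (((2:ℕ):ℚ) • fun _ => t) + (fun _ => t) := by
    funext i; simp; ring
  rw [S.hs, this, mono_add, pw_mul, pw_mono]; ring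

theorem Setup.e3 (S : Setup ν f t s) : mono (fun _ => 3 * t) * (pw 3 f) = pw 3 s := by
  have : (fun _ => 3 * t : Fin (m+1) → ℚ) = (((3:ℕ):ℚ) • fun _ => t) := by
    funext i; simp
  rw [S.hs, this, pw_mul, pw_mono]

theorem Setup.sym (S : Setup ν f t s) : SymF f := by
  have h := S.hf
  unfold IsCharA at h
  rw [mul_comm] at h
  exact SymF.of_altA h

theorem Setup.sup (S : Setup ν f t s) : Sup s (∑ i, lamN ν i) :=
  Sup.char _ (fun i => lamN ν i + rhoN m i) Finset.sum_add_distrib s S.char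

/-- general decomposition statement -/
theorem Setup.decomp (S : Setup ν f t s) (F : CharRing (m+1)) (z a b c : ℤ) (hz : 0 < z)
    (hF : z • F = a • (f * f * f) + b • (f * pw 2 f) + c • pw 3 f)
    (hnn : ∀ l' : Fin (m+1) → ℕ, StrictAnti l' → ∑ i, l' i = 3 * (∑ i, lamN ν i) + ∑ i, rhoN m i →
      0 ≤ a * Lf l' (s * s * s) + b * Lf l' (pw 2 s * s) + c * Lf l' (pw 3 s)) :
    ∃ c' : (Fin m → ℕ) →₀ ℕ, Decomp m F c' ∧ ∀ μ, z * (c' μ : ℤ) =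
      a * (s * s * s * altA m (rhoA m)).coeff (MFPaper.slWt m μ + rhoA m + fun _ => 3 * t)
      + b * (pw 2 s * s * altA m (rhoA m)).coeff (MFPaper.slWt m μ + rhoA m + fun _ => 3 * t)
      + c * (pw 3 s * altA m (rhoA m)).coeff (MFPaper.slWt m μ + rhoA m + fun _ => 3 * t) := by
  have key : z • (mono (fun _ => 3 * t) * (F * altA m (rhoA m))) =
      a • (s * s * s * altA m (rhoA m)) + b • (pw 2 s * s * altA m (rhoA m)) + c • (pw 3 s * altA m (rhoA m)) := by
    rw [← S.e1, ← S.e2, ← S.e3, ← mul_smul_comm, ← smul_mul_assoc, hF]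
    simp only [zsmul_eq_mul]; ring
  have keyc : ∀ u, z * (mono (fun _ => 3 * t) * (F * altA m (rhoA m))).coeff u =
      a * (s * s * s * altA m (rhoA m)).coeff u + b * (pw 2 s * s * altA m (rhoA m)).coeff u + c * (pw 3 s * altA m (rhoA m)).coeff u := by
    intro u
    have := congrArg (fun G : CharRing (m+1) => G.coeff u) key
    simpa only [AddMonoidAlgebra.coeff_add, AddMonoidAlgebra.coeff_smul, Finsupp.add_apply, Finsupp.smul_apply, smul_eq_mul] using this
  have hr : Sup (altA m (rhoA m)) (∑ i, rhoN m i) := by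
    rw [rhoA_eq]; exact Sup.altA _
  have g1 : SymF F := by
    apply SymF.of_smul hz.ne'
    rw [hF]
    have h := S.sym
    exact (((h.mul h).mul h).smul a).add ((h.mul h.pw).smul b) |>.add (h.pw.smul c)
  have g2 : Sup (mono (fun _ => 3 * t) * (F * altA m (rhoA m))) (3 * (∑ i, lamN ν i) + ∑ i, rhoN m i) := by
    apply Sup.of_smul hz.ne'
    rw [key]
    have h := S.sup
    have a1 := ((h.mul h).mul h).mul hr
    have a2 := ((h.pw (k := 2) (by norm_num)).mul h).mul hr
    have a3 := (h.pw (k := 3) (by norm_num)).mul hr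
    set k := ∑ i, lamN ν i
    have q1 : k + k + k = 3 * k := by ring
    have q2 : 2 * k + k = 3 * k := by ring
    rw [q1] at a1
    rw [q2] at a2
    exact ((a1.smul a).add (a2.smul b)).add (a3.smul c)
  have g3 : ((3 * (∑ i, lamN ν i) : ℕ) : ℚ) = 3 * t * (m + 1) := by
    have := S.tk
    push_cast at this ⊢
    rw [this]; ring
  have g4 : ∀ l' : Fin (m+1) → ℕ, StrictAnti l' → ∑ i, l' i = 3 * (∑ i, lamN ν i) + ∑ i, rhoN m i →
      0 ≤ (mono (fun _ => 3 * t) * (F * altA m (rhoA m))).coeff (fun i => (l' i : ℚ)) := by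
    intro l' h' hl'
    have h1 := hnn l' h' hl'
    have h2 := keyc (fun i => (l' i : ℚ))
    have h3 : (0 : ℚ) ≤ ((a * (s * s * s * altA m (rhoA m)).coeff (fun i => (l' i : ℚ)) + b * (pw 2 s * s * altA m (rhoA m)).coeff (fun i => (l' i : ℚ)) + c * (pw 3 s * altA m (rhoA m)).coeff (fun i => (l' i : ℚ)) : ℤ) : ℚ) := by
      push_cast
      exact h1
    rw [← h2] at h3
    have h4 := Int.cast_nonneg_iff.1 h3
    exact nonneg_of_mul_nonneg_right h4 hz
  obtain ⟨c', hc1, hc2⟩ := decomp_of F (3 * t) (3 * ∑ i, lamN ν i) g1 g2 g3 g4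
  refine ⟨c', hc1, ?_⟩
  intro μ
  rw [hc2, ← keyc]
  congr 1
  rw [add_comm (MFPaper.slWt m μ + rhoA m), mono_mul_coeff]

theorem eps_vec (j j' : Fin m) (hj : (j' : ℕ) = (j : ℕ) + 1) (hb : 2 ≤ ν j') (S : Setup ν f t s)
    (ε : Fin m → ℕ) (hε : ε = (fun k => if k = j' then 3 * ν k - 3
            else 3 * ν k + (if (k : ℕ) + 1 = (j : ℕ) then 1 else 0)
              + (if (k : ℕ) = (j : ℕ) + 2 then 2 else 0))) :
    (MFPaper.slWt m ε + rhoA m + fun _ => 3 * t) = (fun i => 3 * (lamN ν i : ℚ)) + rhoA m - rt j - (2:ℚ) • rt j' := by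
  suffices h : MFPaper.slWt m ε = (fun i => 3 * MFPaper.slWt m ν i) - rt j - (2:ℚ) • rt j' by
    rw [h]
    funext i
    simp only [Pi.add_apply, Pi.sub_apply, S.slWt]
    ring
  apply ext_diff
  · intro k
    rw [slWt_diff]
    have h1 := slWt_diff ν k
    simp only [Pi.sub_apply, Pi.smul_apply, smul_eq_mul]
    have h2 : ∀ x : Fin m, rt x k.castSucc - rt x k.succ = (if (k:ℕ) = x then 2 else 0) - (if (k:ℕ) = x + 1 then 1 else 0) - (if (k:ℕ) + 1 = x then 1 else 0) := by
      intro x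
      simp only [rt, Pi.sub_apply, Pi.single_apply, Fin.ext_iff, Fin.val_succ, Fin.val_castSucc]
      split_ifs <;> first | omega | norm_num
    have h3 := h2 j
    have h4 := h2 j'
    have h5 : (ε k : ℚ) = 3 * ν k - ((if (k:ℕ) = j then 2 else 0) - (if (k:ℕ) = j + 1 then 1 else 0) - (if (k:ℕ) + 1 = j then 1 else 0)) - 2 * ((if (k:ℕ) = j' then 2 else 0) - (if (k:ℕ) = j' + 1 then 1 else 0) - (if (k:ℕ) + 1 = j' then 1 else 0)) := by
      rw [hε]
      dsimp only
      by_cases hk : k = j'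
      · subst hk
        rw [if_pos rfl, Nat.cast_sub (by omega)]
        have e0 : ¬ ((j:ℕ) + 1 + 1 = j) := by omega
        simp [hj, e0]
        ring
      · have hk' : (k : ℕ) ≠ j + 1 := by rw [← hj]; exact fun h => hk (Fin.ext h)
        rw [if_neg hk, hj]
        push_cast
        split_ifs <;> first | omega | norm_num
    rw [h5, ← h3, ← h4, ← h1]; ring
  · rw [slWt_sum]
    have h1 := slWt_sum ν
    have hr : ∀ x : Fin m, ∑ i, rt x i = 0 := by
      intro x
      have := sum_mul_rt (fun _ => 1) x
      simpa using this
    simp only [Pi.sub_apply, Pi.smul_apply, smul_eq_mul, Finset.sum_sub_distrib, ← Finset.mul_sum, h1, hr]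
    ring

end Final



/-- **Lemma 4.5.**  Let `X = A_m` with `m ≥ 2` and let `ν = (…, a, b, …)` be a dominant
weight for `X` whose `j`-th coefficient is `a ≥ 1` and whose `(j+1)`-st coefficient is
`b ≥ 2` (here `j, j'` are the corresponding 0-indexed positions, `j' = j + 1`).
Set `ε = 3ν - α_j - 2α_{j+1}` (so `ε` has `j`-th coefficient `3a` and `(j+1)`-st
coefficient `3b - 3`).  Then, where `g` is the character of `Λ³V_X(ν)` and `h` the
character of `Λ²V_X(ν)` (characterised by `6g = f³ - 3f·f^{[2]} + 2f^{[3]}` and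
`2h = f² - f^{[2]}` for `f` the character of `V_X(ν)`):
(i) `V_X(ε)` occurs with multiplicity at least `2` in `Λ³V_X(ν)`;
(ii) the multiplicity of `V_X(ε)` in `Λ²V_X(ν) ⊗ V_X(ν)` exceeds its multiplicity in
`Λ³V_X(ν)` by at least `2`;
(iii) `S(ε) ≥ S(ν) + 2a + 2b - 3`, where `S` is the sum of the coefficients. -/
theorem thm_ext_cube_repeated
    (m : ℕ) (hm : 2 ≤ m) (ν : Fin m → ℕ) (j j' : Fin m)
    (hj : (j' : ℕ) = (j : ℕ) + 1) (ha : 1 ≤ ν j) (hb : 2 ≤ ν j') :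
    ∀ ε : Fin m → ℕ,
      ε = (fun k => if k = j' then 3 * ν k - 3
            else 3 * ν k + (if (k : ℕ) + 1 = (j : ℕ) then 1 else 0)
              + (if (k : ℕ) = (j : ℕ) + 2 then 2 else 0)) →
    ∀ f, IsCharA m ν f →
    ∀ g h : CharRing (m + 1),
      (6 : ℤ) • g = f ^ 3 - 3 • (f * pw 2 f) + 2 • pw 3 f →
      (2 : ℤ) • h = f ^ 2 - pw 2 f →
      (∃ c : (Fin m → ℕ) →₀ ℕ, Decomp m g c ∧ 2 ≤ c ε) ∧
      (∃ c₁ c₂ : (Fin m → ℕ) →₀ ℕ, Decomp m (h * f) c₁ ∧ Decomp m g c₂ ∧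
        c₂ ε + 2 ≤ c₁ ε) ∧
      ((∑ k, ν k) + 2 * ν j + 2 * ν j' ≤ (∑ k, ε k) + 3) := by
  intro ε hε f hf g h hg hh
  obtain ⟨t, ht⟩ : ∃ t : ℚ, t = (∑ j : Fin m, (((j : ℕ) : ℚ) + 1) * (ν j : ℚ)) / (m + 1) := ⟨_, rfl⟩
  obtain ⟨s, hs⟩ : ∃ s : CharRing (m+1), s = mono (fun _ => t) * f := ⟨_, rfl⟩
  have S : Setup ν f t s := ⟨ht, hs, hf⟩
  obtain ⟨A1, A2, A3⟩ := coef_main hj (fun i => lamN ν i + rhoN m i) (lamN ν) (fun _ => rfl) (l_anti ν)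
    (by have := lamN_diff ν j; have := rhoN_diff j; omega)
    (by have := lamN_diff ν j'; have := rhoN_diff j'; omega) s S.char _ (eps_vec j j' hj hb S ε hε)
  have hsum : ∑ i, (lamN ν i + rhoN m i) = (∑ i, lamN ν i) + ∑ i, rhoN m i := Finset.sum_add_distrib
  obtain ⟨c₂, d2, h2⟩ := S.decomp g 6 1 (-3) 2 (by norm_num) (by
    rw [hg]; simp only [zsmul_eq_mul, nsmul_eq_mul]; push_cast; ring) (by
    intro l' h' hl'
    obtain ⟨n, hn⟩ := wreath_g (κ := Fin (∑ i, lamN ν i)) (fun i => lamN ν i + rhoN m i) l' (l_anti ν) h'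
      (by simpa using hsum) (by simpa using hl') s S.char
    have hp : (0:ℚ) ≤ 6 * n := by positivity
    rw [← hn] at hp
    push_cast
    linarith)
  obtain ⟨c₁, d1, h1⟩ := S.decomp (h * f) 2 1 (-1) 0 (by norm_num) (by
    rw [← smul_mul_assoc, hh]; simp only [zsmul_eq_mul]; push_cast; ring) (by
    intro l' h' hl'
    obtain ⟨n, hn⟩ := wreath_hf (κ := Fin (∑ i, lamN ν i)) (fun i => lamN ν i + rhoN m i) l' (l_anti ν) h'
      (by simpa using hsum) (by simpa using hl') s S.char
    have hp : (0:ℚ) ≤ 6 * n := by positivity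
    rw [← hn] at hp
    push_cast
    linarith)
  have v2 := h2 ε
  have v1 := h1 ε
  rw [A1, A2, A3] at v1 v2
  refine ⟨⟨c₂, d2, by omega⟩, ⟨c₁, c₂, d1, d2, by omega⟩, ?_⟩
  have hjj : j ≠ j' := by intro h; rw [h] at hj; omega
  have q1 : ∑ k, (3 * ν k) ≤ ∑ k, (ε k + if k = j' then 3 else 0) := by
    apply Finset.sum_le_sum
    intro k _
    rw [hε]
    dsimp only
    split_ifs <;> omega
  rw [Finset.sum_add_distrib, ← Finset.mul_sum] at q1
  simp only [Finset.sum_ite_eq', Finset.mem_univ, if_true] at q1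
  have q2 : ν j + ν j' ≤ ∑ k, ν k := by
    rw [← Finset.sum_pair hjj]
    exact Finset.sum_le_sum_of_subset (Finset.subset_univ _)
  omega
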